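/- arXiv:2211.14529 — 16 statements merged into one kernel-verified Lean document; each statement's English description precedes it below -/
import Mathlib

section
/- Let I ⊆ ℝ be an open interval and b : I → ℝ a smooth function with b(y) > 0 for all y ∈ I. Let J ⊆ I be an open interval, ε > 0, and let A : J × (−ε, ε) → I be a C¹ map satisfying A(s, 0) = s for all s ∈ J and ∂A/∂t (s, t) = b(A(s, t)) for all (s, t) ∈ J × (−ε, ε). Then for all (s, t) ∈ J × (−ε, ε) one has ∂A/∂s (s, t) = b(A(s, t)) / b(s). -/
open Real Set Filter Topology

/-- If `A` is a `C¹` local flow map of the ODE `y' = b(y)` with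
`A(s,0) = s`, where `b` is smooth and positive on an open interval `I`, then
`∂A/∂s (s,t) = b(A(s,t)) / b(s)`. -/
theorem flow_partial_derivative_eq
    (I J : Set ℝ) (hIopen : IsOpen I) (hIconn : I.OrdConnected)
    (hJopen : IsOpen J) (hJconn : J.OrdConnected) (hJI : J ⊆ I)
    (b : ℝ → ℝ) (hb : ContDiffOn ℝ (⊤ : ℕ∞) b I) (hbpos : ∀ y ∈ I, 0 < b y)
    (ε : ℝ) (hε : 0 < ε)
    (A : ℝ × ℝ → ℝ)
    (hA : ContDiffOn ℝ 1 A (J ×ˢ Ioo (-ε) ε))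
    (hmaps : ∀ p ∈ J ×ˢ Ioo (-ε) ε, A p ∈ I)
    (hA0 : ∀ s ∈ J, A (s, 0) = s)
    (hAt : ∀ p ∈ J ×ˢ Ioo (-ε) ε,
      HasDerivAt (fun t => A (p.1, t)) (b (A p)) p.2) :
    ∀ p ∈ J ×ˢ Ioo (-ε) ε,
      HasDerivAt (fun s => A (s, p.2)) (b (A p) / b p.1) p.1 := by
  rintro ⟨s, t⟩ ⟨hs, ht⟩
  simp only at hs ht ⊢
  have hbc : ContinuousOn (fun y => (b y)⁻¹) I :=
    hb.continuousOn.inv₀ (fun y hy => (hbpos y hy).ne')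
  have hF : ∀ y ∈ I, HasDerivAt (fun u => ∫ x in s..u, (b x)⁻¹) (b y)⁻¹ y := by
    intro y hy
    apply intervalIntegral.integral_hasDerivAt_right
    · exact (hbc.mono (hIconn.uIcc_subset (hJI hs) hy)).intervalIntegrable
    · exact hbc.stronglyMeasurableAtFilter hIopen y hy
    · exact hbc.continuousAt (hIopen.mem_nhds hy)
  generalize (fun u => ∫ x in s..u, (b x)⁻¹) = F at hF
  have h0 : (0 : ℝ) ∈ Ioo (-ε) ε := ⟨by linarith, hε⟩
  have key : ∀ r ∈ J, F (A (r, t)) = F r + t := by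
    intro r hr
    have hd : ∀ u ∈ Ioo (-ε) ε, HasDerivAt (fun u => F (A (r, u)) - u) 0 u := by
      intro u hu
      have hm : (r, u) ∈ J ×ˢ Ioo (-ε) ε := ⟨hr, hu⟩
      have h1 := (hF _ (hmaps _ hm)).comp u (hAt _ hm)
      have h2 := h1.sub (hasDerivAt_id u)
      rw [inv_mul_cancel₀ (hbpos _ (hmaps _ hm)).ne', sub_self] at h2
      exact h2
    have hc := isOpen_Ioo.is_const_of_deriv_eq_zero isPreconnected_Ioo
      (fun u hu => (hd u hu).differentiableAt.differentiableWithinAt)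
      (fun u hu => (hd u hu).deriv) ht h0
    simp only [hA0 r hr] at hc
    linarith
  have hm : (s, t) ∈ J ×ˢ Ioo (-ε) ε := ⟨hs, ht⟩
  have hdA : DifferentiableAt ℝ A (s, t) :=
    (hA.contDiffAt ((hJopen.prod isOpen_Ioo).mem_nhds hm)).differentiableAt (by norm_num)
  have hds : DifferentiableAt ℝ (fun r => A (r, t)) s :=
    DifferentiableAt.comp (f := fun r : ℝ => (r, t)) s hdA (by fun_prop)
  have hd := hds.hasDerivAt
  have h1 := (hF _ (hmaps _ hm)).comp s hd
  have h2 : HasDerivAt (fun r => F r + t) (b s)⁻¹ s := (hF s (hJI hs)).add_const t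
  have h3 : (F ∘ fun r => A (r, t)) =ᶠ[𝓝 s] fun r => F r + t := by
    filter_upwards [hJopen.mem_nhds hs] with r hr using key r hr
  have h4 := h1.unique (h2.congr_of_eventuallyEq h3)
  have hp := (hbpos _ (hmaps _ hm)).ne'
  have h5 : deriv (fun r => A (r, t)) s = b (A (s, t)) / b s := by
    rw [div_eq_mul_inv, ← h4, mul_inv_cancel_left₀ hp]
  rwa [h5] at hd
end

section
/- Fix an integer n ≥ 1 and a real c > 0. Let s₀ ∈ ℝ and y₀ ∈ (0, π/(2c)). For each sign σ ∈ {+1, −1}, define l_σ(s) = (1/c)·arcsin( sin(c·y₀)·exp(σ·n·c²·(s − s₀)) ) on the open set D_σ = { s ∈ ℝ : sin(c·y₀)·exp(σ·n·c²·(s − s₀)) < 1 }. Then l_σ maps D_σ into (0, π/(2c)), satisfies l_σ(s₀) = y₀, satisfies the light-like equation l_σ'(s) = σ·n·c·tan(c·l_σ(s)) for all s ∈ D_σ, and is a C² solution of the type II Grim Reaper ODE on D_σ. -/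
open Real Set Filter Topology

/-- The type II warping function `b_II(y) = n·c·tan(c·y)`. -/
noncomputable def bII (n : ℕ) (c : ℝ) : ℝ → ℝ := fun y => (n : ℝ) * c * Real.tan (c * y)

/-- The type II constant `d_II = -c²·n²`. -/
noncomputable def dII (n : ℕ) (c : ℝ) : ℝ := -(c ^ 2 * (n : ℝ) ^ 2)

/-- The light-like solution `l_σ` of the type II Grim Reaper ODE through `(s₀, y₀)`. -/
noncomputable def lII (n : ℕ) (c s₀ y₀ σ : ℝ) : ℝ → ℝ := fun s =>
  (1 / c) * Real.arcsin (Real.sin (c * y₀) * Real.exp (σ * (n : ℝ) * c ^ 2 * (s - s₀)))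

/-- The domain `D_σ` of the light-like solution `l_σ`. -/
def DII (n : ℕ) (c s₀ y₀ σ : ℝ) : Set ℝ :=
  {s : ℝ | Real.sin (c * y₀) * Real.exp (σ * (n : ℝ) * c ^ 2 * (s - s₀)) < 1}

/-- For `σ = ±1`, the function
`l_σ(s) = (1/c)·arcsin(sin(c·y₀)·exp(σ·n·c²·(s-s₀)))` maps `D_σ` into `(0, π/(2c))`,
passes through `(s₀, y₀)`, satisfies the light-like equation
`l_σ' = σ·n·c·tan(c·l_σ)`, and is a `C²` solution of the type II Grim Reaper ODE on `D_σ`. -/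
theorem lII_lightlike_solution (n : ℕ) (hn : 1 ≤ n) (c : ℝ) (hc : 0 < c)
    (s₀ y₀ : ℝ) (hy₀ : y₀ ∈ Set.Ioo 0 (π / (2 * c)))
    (σ : ℝ) (hσ : σ = 1 ∨ σ = -1) :
    (∀ s ∈ DII n c s₀ y₀ σ, lII n c s₀ y₀ σ s ∈ Set.Ioo 0 (π / (2 * c))) ∧
    lII n c s₀ y₀ σ s₀ = y₀ ∧
    (∀ s ∈ DII n c s₀ y₀ σ,
      HasDerivAt (lII n c s₀ y₀ σ) (σ * (n : ℝ) * c * Real.tan (c * lII n c s₀ y₀ σ s)) s) ∧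
    ContDiffOn ℝ 2 (lII n c s₀ y₀ σ) (DII n c s₀ y₀ σ) ∧
    (∀ s ∈ DII n c s₀ y₀ σ,
      deriv (deriv (lII n c s₀ y₀ σ)) s =
        (1 - (deriv (lII n c s₀ y₀ σ) s) ^ 2 / (bII n c (lII n c s₀ y₀ σ s)) ^ 2)
            * bII n c (lII n c s₀ y₀ σ s) * dII n c
          + (deriv (bII n c) (lII n c s₀ y₀ σ s) / bII n c (lII n c s₀ y₀ σ s))
            * (deriv (lII n c s₀ y₀ σ) s) ^ 2) := by
  have hn' : (0:ℝ) < n := by exact_mod_cast hn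
  have hcy : 0 < c * y₀ := mul_pos hc hy₀.1
  have hcy2 : c * y₀ < π / 2 := by
    have h := mul_lt_mul_of_pos_left hy₀.2 hc
    have e : c * (π / (2 * c)) = π / 2 := by field_simp
    linarith
  have hsin : 0 < Real.sin (c * y₀) := Real.sin_pos_of_pos_of_lt_pi hcy (by linarith [Real.pi_pos])
  have hu : ∀ s, 0 < Real.sin (c * y₀) * Real.exp (σ * (n : ℝ) * c ^ 2 * (s - s₀)) :=
    fun s => mul_pos hsin (Real.exp_pos _)
  have hcl : ∀ s, c * lII n c s₀ y₀ σ s =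
      Real.arcsin (Real.sin (c * y₀) * Real.exp (σ * (n : ℝ) * c ^ 2 * (s - s₀))) := by
    intro s
    simp only [lII]
    field_simp
  have hopen : IsOpen (DII n c s₀ y₀ σ) := by
    apply isOpen_lt <;> fun_prop
  have hmem : ∀ s ∈ DII n c s₀ y₀ σ, lII n c s₀ y₀ σ s ∈ Set.Ioo 0 (π / (2 * c)) := by
    intro s hs
    have h1 := Real.arcsin_pos.2 (hu s)
    have h2 := Real.arcsin_lt_pi_div_two.2 hs
    rw [← hcl] at h1 h2
    refine ⟨pos_of_mul_pos_right h1 hc.le, ?_⟩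
    rw [lt_div_iff₀ (by positivity)]
    linarith
  have hder : ∀ s ∈ DII n c s₀ y₀ σ,
      HasDerivAt (lII n c s₀ y₀ σ) (σ * (n : ℝ) * c * Real.tan (c * lII n c s₀ y₀ σ s)) s := by
    intro s hs
    rw [hcl, Real.tan_arcsin]
    have h0 : HasDerivAt (fun s => σ * (n : ℝ) * c ^ 2 * (s - s₀)) (σ * (n : ℝ) * c ^ 2 * 1) s :=
      ((hasDerivAt_id s).sub_const s₀).const_mul _
    have h1 := (h0.exp).const_mul (Real.sin (c * y₀))
    have h2 := Real.hasDerivAt_arcsin (x := Real.sin (c * y₀) *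
      Real.exp (σ * (n : ℝ) * c ^ 2 * (s - s₀))) (by linarith [hu s]) (ne_of_lt hs)
    have h3 := (h2.comp s h1).const_mul (1 / c)
    refine h3.congr_deriv ?_
    field_simp
  have hcd : ContDiffOn ℝ 2 (lII n c s₀ y₀ σ) (DII n c s₀ y₀ σ) := by
    intro s hs
    apply ContDiffAt.contDiffWithinAt
    have h2 : ContDiffAt ℝ 2 Real.arcsin (Real.sin (c * y₀) *
      Real.exp (σ * (n : ℝ) * c ^ 2 * (s - s₀))) :=
      Real.contDiffAt_arcsin (by linarith [hu s]) (ne_of_lt hs)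
    have h1 : ContDiffAt ℝ 2 (fun s => Real.sin (c * y₀) *
      Real.exp (σ * (n : ℝ) * c ^ 2 * (s - s₀))) s := by fun_prop
    have h3 := ContDiffAt.comp (g := Real.arcsin) s h2 h1
    exact contDiffAt_const.mul h3
  refine ⟨hmem, ?_, hder, hcd, ?_⟩
  · have h := hcl s₀
    simp only [sub_self, mul_zero, Real.exp_zero, mul_one] at h
    rw [Real.arcsin_sin (by linarith [Real.pi_pos]) hcy2.le] at h
    exact mul_left_cancel₀ hc.ne' h
  · intro s hs
    have hev : deriv (lII n c s₀ y₀ σ) =ᶠ[𝓝 s] fun t => σ * bII n c (lII n c s₀ y₀ σ t) := by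
      filter_upwards [hopen.mem_nhds hs] with t ht
      rw [(hder t ht).deriv]
      simp only [bII]
      ring
    have h1 : 0 < c * lII n c s₀ y₀ σ s := mul_pos hc (hmem s hs).1
    have h2 : c * lII n c s₀ y₀ σ s < π / 2 := by
      rw [hcl]
      exact Real.arcsin_lt_pi_div_two.2 hs
    have hb : 0 < bII n c (lII n c s₀ y₀ σ s) :=
      mul_pos (mul_pos hn' hc) (Real.tan_pos_of_pos_of_lt_pi_div_two h1 h2)
    have hcos : Real.cos (c * lII n c s₀ y₀ σ s) ≠ 0 :=
      (Real.cos_pos_of_mem_Ioo ⟨by linarith, h2⟩).ne'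
    have hbd : DifferentiableAt ℝ (bII n c) (lII n c s₀ y₀ σ s) := by
      have ht := (Real.differentiableAt_tan.2 hcos).comp (lII n c s₀ y₀ σ s)
        ((differentiableAt_id (𝕜 := ℝ)).const_mul c)
      exact ht.const_mul ((n : ℝ) * c)
    have hd := hev.eq_of_nhds
    have hdd : deriv (deriv (lII n c s₀ y₀ σ)) s =
        σ * (deriv (bII n c) (lII n c s₀ y₀ σ s) * deriv (lII n c s₀ y₀ σ) s) := by
      rw [hev.deriv_eq]
      exact ((hbd.hasDerivAt.comp s (hder s hs).differentiableAt.hasDerivAt).const_mul σ).deriv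
    have hσ2 : σ ^ 2 = 1 := by rcases hσ with h | h <;> simp [h]
    rw [hdd, hd]
    simp only [mul_pow, hσ2]
    have hbne := hb.ne'
    field_simp
    rw [hσ2]
    ring
end

section
/- Fix an integer n ≥ 1 and a real c > 0. Let s₀ ∈ ℝ and y₀ ∈ (−∞, 0). For each sign σ ∈ {+1, −1}, define l_σ(s) = (1/c)·arsinh( sinh(c·y₀)·exp(−σ·n·c²·(s − s₀)) ) for s ∈ ℝ. Then l_σ is defined on all of ℝ, takes values in (−∞, 0), satisfies l_σ(s₀) = y₀, satisfies the light-like equation l_σ'(s) = σ·(−n·c·tanh(c·l_σ(s))) for all s ∈ ℝ, and is a C² solution of the type III Grim Reaper ODE on ℝ. -/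
open Real Set Filter Topology

/-- The type III warping function `b_III(y) = -n·c·tanh(c·y)`. -/
noncomputable def bIII (n : ℕ) (c : ℝ) : ℝ → ℝ := fun y => -((n : ℝ) * c * Real.tanh (c * y))

/-- The type III constant `d_III = c²·n²`. -/
noncomputable def dIII (n : ℕ) (c : ℝ) : ℝ := c ^ 2 * (n : ℝ) ^ 2

/-- The light-like solution `l_σ` of the type III Grim Reaper ODE through `(s₀, y₀)`. -/
noncomputable def lIII (n : ℕ) (c s₀ y₀ σ : ℝ) : ℝ → ℝ := fun s =>
  (1 / c) * Real.arsinh (Real.sinh (c * y₀) * Real.exp (-(σ * (n : ℝ) * c ^ 2 * (s - s₀))))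

/-- For `σ = ±1`, the function
`l_σ(s) = (1/c)·arsinh(sinh(c·y₀)·exp(-σ·n·c²·(s-s₀)))` is defined on all of `ℝ`, takes
values in `(-∞, 0)`, passes through `(s₀, y₀)`, satisfies the light-like equation
`l_σ' = σ·(-n·c·tanh(c·l_σ))`, and is a `C²` solution of the type III Grim Reaper ODE on `ℝ`. -/
theorem lIII_lightlike_solution (n : ℕ) (hn : 1 ≤ n) (c : ℝ) (hc : 0 < c)
    (s₀ y₀ : ℝ) (hy₀ : y₀ ∈ Set.Iio (0 : ℝ))
    (σ : ℝ) (hσ : σ = 1 ∨ σ = -1) :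
    (∀ s : ℝ, lIII n c s₀ y₀ σ s ∈ Set.Iio (0 : ℝ)) ∧
    lIII n c s₀ y₀ σ s₀ = y₀ ∧
    (∀ s : ℝ,
      HasDerivAt (lIII n c s₀ y₀ σ)
        (σ * (-((n : ℝ) * c * Real.tanh (c * lIII n c s₀ y₀ σ s)))) s) ∧
    ContDiff ℝ 2 (lIII n c s₀ y₀ σ) ∧
    (∀ s : ℝ,
      deriv (deriv (lIII n c s₀ y₀ σ)) s =
        (1 - (deriv (lIII n c s₀ y₀ σ) s) ^ 2 / (bIII n c (lIII n c s₀ y₀ σ s)) ^ 2)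
            * bIII n c (lIII n c s₀ y₀ σ s) * dIII n c
          + (deriv (bIII n c) (lIII n c s₀ y₀ σ s) / bIII n c (lIII n c s₀ y₀ σ s))
            * (deriv (lIII n c s₀ y₀ σ) s) ^ 2) := by
  have hn0 : (n : ℝ) ≠ 0 := by
    have : n ≠ 0 := by omega
    exact_mod_cast this
  have hc0 : c ≠ 0 := hc.ne'
  have hy : y₀ < 0 := hy₀
  have hneg : ∀ s : ℝ, lIII n c s₀ y₀ σ s < 0 := by
    intro s
    unfold lIII
    apply mul_neg_of_pos_of_neg (by positivity)
    rw [Real.arsinh_neg_iff]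
    exact mul_neg_of_neg_of_pos (Real.sinh_neg_iff.2 (mul_neg_of_pos_of_neg hc hy))
      (Real.exp_pos _)
  have hD : ∀ s : ℝ,
      HasDerivAt (lIII n c s₀ y₀ σ)
        (σ * (-((n : ℝ) * c * Real.tanh (c * lIII n c s₀ y₀ σ s)))) s := by
    intro s
    have h1 : HasDerivAt (fun s : ℝ => -(σ * (n : ℝ) * c ^ 2 * (s - s₀)))
        (-(σ * (n : ℝ) * c ^ 2 * 1)) s :=
      (((hasDerivAt_id s).sub_const s₀).const_mul _).neg
    have h2 := (((h1.exp).const_mul (Real.sinh (c * y₀))).arsinh).const_mul (1 / c)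
    have h3 : c * lIII n c s₀ y₀ σ s = Real.arsinh (Real.sinh (c * y₀) *
        Real.exp (-(σ * (n : ℝ) * c ^ 2 * (s - s₀)))) := by
      unfold lIII
      field_simp
    refine h2.congr_deriv ?_
    rw [h3, Real.tanh_eq_sinh_div_cosh, Real.sinh_arsinh, Real.cosh_arsinh, smul_eq_mul]
    generalize Real.exp (-(σ * (n : ℝ) * c ^ 2 * (s - s₀))) = E
    have : √(1 + (Real.sinh (c * y₀) * E) ^ 2) ≠ 0 := by positivity
    field_simp
  have hderiv : deriv (lIII n c s₀ y₀ σ) = fun s => σ * bIII n c (lIII n c s₀ y₀ σ s) :=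
    funext fun s => (hD s).deriv
  have hb : Differentiable ℝ (bIII n c) := by
    have : bIII n c = fun y => -((n : ℝ) * c * (Real.sinh (c * y) / Real.cosh (c * y))) := by
      funext y
      rw [← Real.tanh_eq_sinh_div_cosh, bIII]
    rw [this]
    intro y
    have := (Real.cosh_pos (c * y)).ne'
    fun_prop (disch := assumption)
  refine ⟨hneg, ?_, hD, ?_, ?_⟩
  · simp [lIII, hc0]
  · unfold lIII
    apply ContDiff.mul contDiff_const
    apply ContDiff.arsinh
    fun_prop
  · intro s
    have hb0 : bIII n c (lIII n c s₀ y₀ σ s) ≠ 0 := by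
      have ht : Real.tanh (c * lIII n c s₀ y₀ σ s) ≠ 0 := by
        rw [Real.tanh_eq_sinh_div_cosh]
        exact div_ne_zero (Real.sinh_neg_iff.2 (mul_neg_of_pos_of_neg hc (hneg s))).ne
          (Real.cosh_pos _).ne'
      exact neg_ne_zero.2 (mul_ne_zero (mul_ne_zero hn0 hc0) ht)
    have hdd : HasDerivAt (fun s => σ * bIII n c (lIII n c s₀ y₀ σ s))
        (σ * (deriv (bIII n c) (lIII n c s₀ y₀ σ s) *
          (σ * bIII n c (lIII n c s₀ y₀ σ s)))) s :=
      (((hb _).hasDerivAt).comp s (hD s)).const_mul σ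
    have hs : σ ^ 2 = 1 := by rcases hσ with h | h <;> simp [h]
    rw [hderiv, hdd.deriv]
    simp only [mul_pow, hs]
    field_simp
    rw [hs]
    ring
end

section
/- Let I ⊆ ℝ be an open interval, b : I → (0, ∞) a smooth positive function, and d ∈ ℝ. Let L ⊆ ℝ be an open interval, s₀ ∈ L, and let f, g : L → I be C² solutions of the Grim Reaper ODE f''(s) = (1 − f'(s)²/b(f(s))²)·b(f(s))·d + (b'(f(s))/b(f(s)))·f'(s)². Assume f(s₀) = g(s₀), that g is light-like at s₀, i.e. g'(s₀)² = b(g(s₀))², and that f is not light-like at s₀, i.e. f'(s₀)² ≠ b(f(s₀))². Then f(s) ≠ g(s) for every s ∈ L with s ≠ s₀. -/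
open Real Set Filter Topology


/-- A primitive of `1 / b` on an open interval. -/
lemma grim_primitive (I : Set ℝ) (hIopen : IsOpen I) (hIconn : I.OrdConnected)
    (b : ℝ → ℝ) (hb : ContinuousOn b I) (hbpos : ∀ y ∈ I, 0 < b y) (y₀ : ℝ) (hy₀ : y₀ ∈ I) :
    ∃ B : ℝ → ℝ, ∀ y ∈ I, HasDerivAt B (b y)⁻¹ y := by
  have hc : ContinuousOn (fun y => (b y)⁻¹) I := hb.inv₀ fun y hy => (hbpos y hy).ne'
  refine ⟨fun y => ∫ t in y₀..y, (b t)⁻¹, fun y hy => ?_⟩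
  refine intervalIntegral.integral_hasDerivAt_right ?_ ?_ ?_
  · exact (hc.mono (hIconn.uIcc_subset hy₀ hy)).intervalIntegrable
  · exact hc.stronglyMeasurableAtFilter hIopen y hy
  · exact hc.continuousAt (hIopen.mem_nhds hy)

/-- The reduced velocity `u = f' / b(f)` is the derivative of `B ∘ f`, and
`(1 - u²) exp (2 d B(f))` is a first integral of the Grim Reaper ODE. -/
lemma grim_first_integral
    (I : Set ℝ) (hIopen : IsOpen I)
    (b : ℝ → ℝ) (hb : ContDiffOn ℝ (⊤ : ℕ∞) b I) (hbpos : ∀ y ∈ I, 0 < b y)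
    (d : ℝ) (B : ℝ → ℝ) (hB : ∀ y ∈ I, HasDerivAt B (b y)⁻¹ y)
    (L : Set ℝ) (hLopen : IsOpen L) (hLconn : L.OrdConnected)
    (f : ℝ → ℝ)
    (hfmaps : ∀ s ∈ L, f s ∈ I)
    (hf : ContDiffOn ℝ 2 f L)
    (hfode : ∀ s ∈ L,
      deriv (deriv f) s =
        (1 - (deriv f s) ^ 2 / (b (f s)) ^ 2) * b (f s) * d
          + (deriv b (f s) / b (f s)) * (deriv f s) ^ 2) :
    (∀ s ∈ L, HasDerivAt (fun t => B (f t)) (deriv f s / b (f s)) s) ∧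
    ∀ s ∈ L, ∀ t ∈ L,
      (1 - (deriv f s / b (f s)) ^ 2) * Real.exp (2 * d * B (f s)) =
      (1 - (deriv f t / b (f t)) ^ 2) * Real.exp (2 * d * B (f t)) := by
  have h1 : ∀ s ∈ L, HasDerivAt f (deriv f s) s := fun s hs =>
    ((hf.differentiableOn (by norm_num)).differentiableAt (hLopen.mem_nhds hs)).hasDerivAt
  have h2 : ∀ s ∈ L, HasDerivAt (deriv f) (deriv (deriv f) s) s := fun s hs =>
    (((hf.deriv_of_isOpen (m := 1) hLopen (by norm_num)).differentiableOn
      (by norm_num)).differentiableAt (hLopen.mem_nhds hs)).hasDerivAt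
  have hb1 : ∀ y ∈ I, HasDerivAt b (deriv b y) y := fun y hy =>
    ((hb.differentiableOn (by simp)).differentiableAt (hIopen.mem_nhds hy)).hasDerivAt
  have hF : ∀ s ∈ L, HasDerivAt (fun t => B (f t)) (deriv f s / b (f s)) s := by
    intro s hs
    have := (hB _ (hfmaps s hs)).comp s (h1 s hs)
    rw [div_eq_inv_mul]
    exact this
  refine ⟨hF, ?_⟩
  have hE : ∀ s ∈ L, HasDerivAt (fun t => (1 - (deriv f t / b (f t)) ^ 2) *
      Real.exp (2 * d * B (f t))) 0 s := by
    intro s hs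
    have hb0 : b (f s) ≠ 0 := (hbpos _ (hfmaps s hs)).ne'
    have hbf : HasDerivAt (fun t => b (f t)) (deriv b (f s) * deriv f s) s :=
      (hb1 _ (hfmaps s hs)).comp s (h1 s hs)
    have hu := (h2 s hs).fun_div hbf hb0
    have hw := (hu.fun_pow 2).const_sub 1
    have he := ((hF s hs).const_mul (2 * d)).exp
    refine (hw.fun_mul he).congr_deriv ?_
    rw [hfode s hs]
    generalize Real.exp (2 * d * B (f s)) = e
    norm_num
    field_simp
    ring
  intro s hs t ht
  exact hLopen.is_const_of_deriv_eq_zero hLconn.isPreconnected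
    (fun x hx => (hE x hx).differentiableAt.differentiableWithinAt)
    (fun x hx => (hE x hx).deriv) hs ht

/-- A non-light-like solution of the Grim Reaper ODE meeting a light-like
solution at `s₀` intersects it only at `s₀`. -/
theorem grimReaper_lightlike_intersection_unique
    (I : Set ℝ) (hIopen : IsOpen I) (hIconn : I.OrdConnected)
    (b : ℝ → ℝ) (hb : ContDiffOn ℝ (⊤ : ℕ∞) b I) (hbpos : ∀ y ∈ I, 0 < b y)
    (d : ℝ)
    (L : Set ℝ) (hLopen : IsOpen L) (hLconn : L.OrdConnected)
    (s₀ : ℝ) (hs₀ : s₀ ∈ L)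
    (f g : ℝ → ℝ)
    (hfmaps : ∀ s ∈ L, f s ∈ I)
    (hf : ContDiffOn ℝ 2 f L)
    (hfode : ∀ s ∈ L,
      deriv (deriv f) s =
        (1 - (deriv f s) ^ 2 / (b (f s)) ^ 2) * b (f s) * d
          + (deriv b (f s) / b (f s)) * (deriv f s) ^ 2)
    (hgmaps : ∀ s ∈ L, g s ∈ I)
    (hg : ContDiffOn ℝ 2 g L)
    (hgode : ∀ s ∈ L,
      deriv (deriv g) s =
        (1 - (deriv g s) ^ 2 / (b (g s)) ^ 2) * b (g s) * d
          + (deriv b (g s) / b (g s)) * (deriv g s) ^ 2)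
    (heq : f s₀ = g s₀)
    (hglight : (deriv g s₀) ^ 2 = (b (g s₀)) ^ 2)
    (hfnot : (deriv f s₀) ^ 2 ≠ (b (f s₀)) ^ 2) :
    ∀ s ∈ L, s ≠ s₀ → f s ≠ g s := by
  intro s hs hne hfg
  obtain ⟨B, hB⟩ := grim_primitive I hIopen hIconn b hb.continuousOn hbpos (f s₀) (hfmaps s₀ hs₀)
  obtain ⟨hF, hFc⟩ := grim_first_integral I hIopen b hb hbpos d B hB L hLopen hLconn f
    hfmaps hf hfode
  obtain ⟨hG, hGc⟩ := grim_first_integral I hIopen b hb hbpos d B hB L hLopen hLconn g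
    hgmaps hg hgode
  have hgl : ∀ t ∈ L, (deriv g t / b (g t)) ^ 2 = 1 := by
    intro t ht
    have h := hGc t ht s₀ hs₀
    have hb0 : b (g s₀) ≠ 0 := (hbpos _ (hgmaps s₀ hs₀)).ne'
    rw [div_pow (deriv g s₀), hglight, div_self (pow_ne_zero 2 hb0), sub_self, zero_mul] at h
    have := (mul_eq_zero.1 h).resolve_right (Real.exp_ne_zero _)
    linarith
  have hfl : ∀ t ∈ L, (deriv f t / b (f t)) ^ 2 ≠ 1 := by
    intro t ht h1
    have h := hFc s₀ hs₀ t ht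
    have hb0 : b (f s₀) ≠ 0 := (hbpos _ (hfmaps s₀ hs₀)).ne'
    rw [h1, sub_self, zero_mul] at h
    have h3 := (mul_eq_zero.1 h).resolve_right (Real.exp_ne_zero _)
    apply hfnot
    rw [div_pow] at h3
    field_simp at h3
    linarith
  have hD : ∀ t ∈ L, HasDerivAt (fun t => B (f t) - B (g t))
      (deriv f t / b (f t) - deriv g t / b (g t)) t := fun t ht => (hF t ht).fun_sub (hG t ht)
  have key : ∀ x ∈ L, ∀ y ∈ L, x < y → f x = g x → f y = g y → False := by
    intro x hx y hy hxy h1 h2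
    have hsub : Icc x y ⊆ L := hLconn.out hx hy
    obtain ⟨c, hc, hc0⟩ := exists_hasDerivAt_eq_zero hxy
      (fun t ht => (hD t (hsub ht)).continuousAt.continuousWithinAt)
      (by simp [h1, h2]) (fun t ht => hD t (hsub (Ioo_subset_Icc_self ht)))
    have hcL := hsub (Ioo_subset_Icc_self hc)
    apply hfl c hcL
    rw [sub_eq_zero.1 hc0]
    exact hgl c hcL
  rcases lt_or_gt_of_ne hne with h | h
  · exact key s hs s₀ hs₀ h hfg heq
  · exact key s₀ hs₀ s hs h heq hfg
end

section
/- Fix an integer n ≥ 1 and a real c > 0. Let f : (a₁, a₂) → (0, π/(2c)) be a C² solution of the type II Grim Reaper ODE. If a₂ < +∞, then f(s) does not tend to 0 as s → a₂ from the left; likewise, if a₁ > −∞, then f(s) does not tend to 0 as s → a₁ from the right. In other words, solutions of the type II Grim Reaper ODE do not blow up to the 0-axis in finite time. -/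
open Real Set Filter Topology

/-- `f` is a `C²` solution of the type II Grim Reaper ODE on `L`, with values in
`I_II = (0, π/(2c))`. -/
def IsGrimReaperSolII (n : ℕ) (c : ℝ) (f : ℝ → ℝ) (L : Set ℝ) : Prop :=
  (∀ s ∈ L, f s ∈ Set.Ioo 0 (π / (2 * c))) ∧
  ContDiffOn ℝ 2 f L ∧
  ∀ s ∈ L,
    deriv (deriv f) s =
      (1 - (deriv f s) ^ 2 / (bII n c (f s)) ^ 2) * bII n c (f s) * (-(c ^ 2 * (n : ℝ) ^ 2))
        + (deriv (bII n c) (f s) / bII n c (f s)) * (deriv f s) ^ 2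


lemma grim_lower (n : ℕ) (hn : 1 ≤ n) (c : ℝ) (hc : 0 < c) (f : ℝ → ℝ) (L : Set ℝ)
    (hLo : IsOpen L) (hLc : Convex ℝ L) (hf : IsGrimReaperSolII n c f L) (s₀ : ℝ) (hs₀ : s₀ ∈ L) :
    ∃ A B M : ℝ, ∀ s ∈ L, A + B * s - M * s ^ 2 ≤ Real.log (Real.sin (c * f s)) := by
  obtain ⟨hr, hC, hode⟩ := hf
  have hn0 : (n : ℝ) ≠ 0 := by positivity
  have hpos : ∀ s ∈ L, 0 < c * f s ∧ c * f s < π / 2 := by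
    intro s hs
    obtain ⟨h1, h2⟩ := hr s hs
    refine ⟨by positivity, ?_⟩
    rw [lt_div_iff₀ (by positivity)] at h2
    linarith
  have hsin : ∀ s ∈ L, 0 < Real.sin (c * f s) := fun s hs =>
    Real.sin_pos_of_pos_of_lt_pi (hpos s hs).1 (by linarith [(hpos s hs).2, Real.pi_pos])
  have hcos : ∀ s ∈ L, 0 < Real.cos (c * f s) := fun s hs =>
    Real.cos_pos_of_mem_Ioo ⟨by linarith [(hpos s hs).1, Real.pi_pos], (hpos s hs).2⟩
  have hd1 : ∀ s ∈ L, HasDerivAt f (deriv f s) s := fun s hs =>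
    ((hC.differentiableOn (by norm_num)).differentiableAt (hLo.mem_nhds hs)).hasDerivAt
  have hC1 : ContDiffOn ℝ 1 (deriv f) L :=
    ((contDiffOn_succ_iff_deriv_of_isOpen (n := 1) hLo).1 (by simpa [one_add_one_eq_two] using hC)).2.2
  have hd2 : ∀ s ∈ L, HasDerivAt (deriv f) (deriv (deriv f) s) s := fun s hs =>
    ((hC1.differentiableOn (by norm_num)).differentiableAt (hLo.mem_nhds hs)).hasDerivAt
  set M : ℝ := (n : ℝ) ^ 3 * c ^ 4 with hM
  let ψ : ℝ → ℝ := fun s => Real.log (Real.sin (c * f s)) + M / 2 * s ^ 2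
  let ψ' : ℝ → ℝ := fun s => Real.cos (c * f s) * (c * deriv f s) / Real.sin (c * f s) + M * s
  let ψ'' : ℝ → ℝ := fun s => c ^ 2 * (deriv f s) ^ 2 * n * (cos (c * f s)) ^ 2 / sin (c * f s) ^ 2
  have h1 : ∀ s ∈ L, HasDerivAt ψ (ψ' s) s := by
    intro s hs
    have := ((((hd1 s hs).const_mul c).sin).log (hsin s hs).ne').add
      (((hasDerivAt_id s).pow 2).const_mul (M / 2))
    refine this.congr_deriv ?_
    simp [ψ']
    ring
  have h2 : ∀ s ∈ L, HasDerivAt ψ' (ψ'' s) s := by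
    intro s hs
    have hS := hsin s hs
    have hK := hcos s hs
    have := (((((hd1 s hs).const_mul c).cos).mul ((hd2 s hs).const_mul c)).div
      (((hd1 s hs).const_mul c).sin) hS.ne').add ((hasDerivAt_id s).const_mul M)
    refine this.congr_deriv ?_
    have hb : deriv (bII n c) (f s) = n * c * (1 / cos (c * f s) ^ 2 * c) := by
      have h3 : HasDerivAt (fun y => c * y) c (f s) := by
        simpa using (hasDerivAt_id (f s)).const_mul c
      have h4 := ((Real.hasDerivAt_tan hK.ne').comp (f s) h3).const_mul ((n : ℝ) * c)
      exact h4.deriv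
    rw [hode s hs, hb]
    simp only [bII, ψ'', Real.tan_eq_sin_div_cos, hM, Pi.mul_apply]
    have hsq : sin (c * f s) ^ 2 = 1 - cos (c * f s) ^ 2 := by
      rw [← Real.sin_sq_add_cos_sq (c * f s)]; ring
    generalize deriv f s = p at *
    generalize sin (c * f s) = S at *
    generalize cos (c * f s) = K at *
    have hp : p ^ 2 * c ^ 2 * S ^ 2 = p ^ 2 * c ^ 2 * (1 - K ^ 2) := by rw [hsq]
    field_simp
    linear_combination (-1 : ℝ) * p ^ 2 * hsq
  have hconv : ConvexOn ℝ L ψ := by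
    refine convexOn_of_hasDerivWithinAt2_nonneg hLc (f' := ψ') (f'' := ψ'')
      (fun s hs => (h1 s hs).continuousAt.continuousWithinAt) ?_ ?_ ?_
    · intro s hs
      exact (h1 s (interior_subset hs)).hasDerivWithinAt
    · intro s hs
      exact (h2 s (interior_subset hs)).hasDerivWithinAt
    · intro s hs
      positivity
  refine ⟨ψ s₀ - ψ' s₀ * s₀, ψ' s₀, M / 2, fun s hs => ?_⟩
  have key : ψ s₀ + ψ' s₀ * (s - s₀) ≤ ψ s := by
    rcases lt_trichotomy s s₀ with h | h | h
    · have := hconv.slope_le_of_hasDerivAt hs hs₀ h (h1 s₀ hs₀)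
      rw [slope_def_field, div_le_iff₀ (by linarith)] at this
      linarith
    · subst h; simp
    · have := hconv.le_slope_of_hasDerivAt hs₀ hs h (h1 s₀ hs₀)
      rw [slope_def_field, le_div_iff₀ (by linarith)] at this
      linarith
  have : ψ s = Real.log (Real.sin (c * f s)) + M / 2 * s ^ 2 := rfl
  linarith

lemma grim_contra (c : ℝ) (hc : 0 < c) (f : ℝ → ℝ) (k A B M : ℝ) (l : Filter ℝ) [l.NeBot]
    (hl : l ≤ 𝓝 k) (hev : ∀ᶠ s in l, f s ∈ Set.Ioo 0 (π / (2 * c)))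
    (hA : ∀ᶠ s in l, A + B * s - M * s ^ 2 ≤ Real.log (Real.sin (c * f s)))
    (ht : Tendsto f l (𝓝 0)) : False := by
  have h1 : Tendsto (fun s => Real.sin (c * f s)) l (𝓝[>] 0) := by
    rw [tendsto_nhdsWithin_iff]
    constructor
    · have : Tendsto (fun y : ℝ => Real.sin (c * y)) (𝓝 0) (𝓝 0) := by
        have h : Continuous (fun y : ℝ => Real.sin (c * y)) := by fun_prop
        simpa using h.tendsto 0
      exact this.comp ht
    · filter_upwards [hev] with s hs
      obtain ⟨h1, h2⟩ := hs
      rw [lt_div_iff₀ (by positivity)] at h2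
      exact Real.sin_pos_of_pos_of_lt_pi (by positivity) (by linarith [Real.pi_pos])
  have h2 := Real.tendsto_log_nhdsGT_zero.comp h1
  have h3 : Tendsto (fun s : ℝ => A + B * s - M * s ^ 2) l (𝓝 (A + B * k - M * k ^ 2)) := by
    have h : Continuous (fun s : ℝ => A + B * s - M * s ^ 2) := by fun_prop
    exact (h.tendsto k).mono_left hl
  have h4 : Tendsto (fun s : ℝ => A + B * s - M * s ^ 2) l atBot := tendsto_atBot_mono' l hA h2
  exact not_tendsto_nhds_of_tendsto_atBot h4 _ h3

/-- Solutions of the type II Grim Reaper ODE on `(a₁, a₂)` do not blow up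
to the `0`-axis in finite time: if `a₂` is finite then `f` does not tend to `0` at `a₂⁻`,
and if `a₁` is finite then `f` does not tend to `0` at `a₁⁺`. -/
theorem grimReaperII_no_blowup_to_zero (n : ℕ) (hn : 1 ≤ n) (c : ℝ) (hc : 0 < c)
    (a₁ a₂ : EReal) (ha : a₁ < a₂) (f : ℝ → ℝ)
    (hf : IsGrimReaperSolII n c f {s : ℝ | a₁ < (s : EReal) ∧ (s : EReal) < a₂}) :
    (∀ k : ℝ, a₂ = (k : EReal) → ¬ Filter.Tendsto f (𝓝[<] k) (𝓝 0)) ∧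
    (∀ k : ℝ, a₁ = (k : EReal) → ¬ Filter.Tendsto f (𝓝[>] k) (𝓝 0)) := by
  set L : Set ℝ := {s : ℝ | a₁ < (s : EReal) ∧ (s : EReal) < a₂} with hL
  have hLo : IsOpen L := (isOpen_Ioo (a := a₁) (b := a₂)).preimage continuous_coe_real_ereal
  have hLc : Convex ℝ L := by
    apply Set.OrdConnected.convex
    refine ⟨fun x hx y hy z hz => ⟨hx.1.trans_le ?_, lt_of_le_of_lt ?_ hy.2⟩⟩
    · exact_mod_cast hz.1
    · exact_mod_cast hz.2
  obtain ⟨s₀, hs₀⟩ : ∃ s₀, s₀ ∈ L := EReal.lt_iff_exists_real_btwn.1 ha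
  obtain ⟨A, B, M, hA⟩ := grim_lower n hn c hc f L hLo hLc hf s₀ hs₀
  constructor
  · rintro k rfl ht
    have hk : s₀ < k := by exact_mod_cast hs₀.2
    have hev : ∀ᶠ s in 𝓝[<] k, s ∈ L := by
      filter_upwards [Ioo_mem_nhdsLT hk] with s hs
      exact ⟨hs₀.1.trans (by exact_mod_cast hs.1), by exact_mod_cast hs.2⟩
    exact grim_contra c hc f k A B M (𝓝[<] k) nhdsWithin_le_nhds
      (hev.mono fun s hs => hf.1 s hs) (hev.mono fun s hs => hA s hs) ht
  · rintro k rfl ht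
    have hk : k < s₀ := by exact_mod_cast hs₀.1
    have hev : ∀ᶠ s in 𝓝[>] k, s ∈ L := by
      filter_upwards [Ioo_mem_nhdsGT hk] with s hs
      exact ⟨by exact_mod_cast hs.1, lt_trans (by exact_mod_cast hs.2) hs₀.2⟩
    exact grim_contra c hc f k A B M (𝓝[>] k) nhdsWithin_le_nhds
      (hev.mono fun s hs => hf.1 s hs) (hev.mono fun s hs => hA s hs) ht
end

section
/- Fix an integer n ≥ 1 and a real c > 0. Let f : (a₁, a₂) → (−∞, 0) be a C² solution of the type III Grim Reaper ODE. If a₂ < +∞, then f(s) does not tend to 0 as s → a₂ from the left; likewise, if a₁ > −∞, then f(s) does not tend to 0 as s → a₁ from the right. In other words, solutions of the type III Grim Reaper ODE do not blow up to the 0-axis in finite time. -/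
open Real Set Filter Topology

/-- `f` is a `C²` solution of the type III Grim Reaper ODE on `L`, with values in
`I_III = (-∞, 0)`. -/
def IsGrimReaperSolIII (n : ℕ) (c : ℝ) (f : ℝ → ℝ) (L : Set ℝ) : Prop :=
  (∀ s ∈ L, f s ∈ Set.Iio (0 : ℝ)) ∧
  ContDiffOn ℝ 2 f L ∧
  ∀ s ∈ L,
    deriv (deriv f) s =
      (1 - (deriv f s) ^ 2 / (bIII n c (f s)) ^ 2) * bIII n c (f s) * (c ^ 2 * (n : ℝ) ^ 2)
        + (deriv (bIII n c) (f s) / bIII n c (f s)) * (deriv f s) ^ 2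

lemma bIII_pos (n : ℕ) (hn : 1 ≤ n) (c : ℝ) (hc : 0 < c) (y : ℝ) (hy : y < 0) :
    0 < bIII n c y := by
  have h0 : (0 : ℝ) < n := by exact_mod_cast hn
  have h1 : Real.sinh (c * y) < 0 := Real.sinh_neg_iff.2 (mul_neg_of_pos_of_neg hc hy)
  have h2 : Real.tanh (c * y) < 0 := by
    rw [Real.tanh_eq_sinh_div_cosh]
    exact div_neg_of_neg_of_pos h1 (Real.cosh_pos _)
  have h3 : 0 < n * c := by positivity
  have := mul_neg_of_pos_of_neg h3 h2
  simp only [bIII]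
  linarith

lemma neg_tanh_le (t : ℝ) (ht : t < 0) : -Real.tanh t ≤ -2 * t := by
  rw [Real.tanh_eq, ← neg_div, div_le_iff₀ (by positivity)]
  have h1 : Real.exp t = Real.exp (-t) * Real.exp (2 * t) := by
    rw [← Real.exp_add]; ring_nf
  have h2 := Real.add_one_le_exp (2 * t)
  have h3 := mul_le_mul_of_nonneg_left h2 (Real.exp_pos (-t)).le
  have h4 := mul_neg_of_pos_of_neg (Real.exp_pos t) ht
  nlinarith

lemma bIII_le (n : ℕ) (c : ℝ) (hc : 0 < c) (y : ℝ) (hy : y < 0) :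
    bIII n c y ≤ 2 * n * c ^ 2 * (-y) := by
  have h := neg_tanh_le (c * y) (mul_neg_of_pos_of_neg hc hy)
  have h3 : 0 ≤ n * c := by positivity
  have := mul_le_mul_of_nonneg_left h h3
  simp only [bIII]
  nlinarith

lemma bIII_differentiable (n : ℕ) (c : ℝ) : Differentiable ℝ (bIII n c) := by
  intro y
  have : bIII n c = fun y => -((n : ℝ) * c * (Real.sinh (c * y) / Real.cosh (c * y))) := by
    funext y
    simp only [bIII, Real.tanh_eq_sinh_div_cosh]
  rw [this]
  have h : Real.cosh (c * y) ≠ 0 := (Real.cosh_pos _).ne'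
  fun_prop (disch := assumption)

lemma no_blowup_right (n : ℕ) (hn : 1 ≤ n) (c : ℝ) (hc : 0 < c) (a k : ℝ) (hak : a < k)
    (f : ℝ → ℝ) (hf : IsGrimReaperSolIII n c f (Ioo a k)) :
    ¬ Tendsto f (𝓝[<] k) (𝓝 0) := by
  intro hlim
  obtain ⟨hneg, hC, hode⟩ := hf
  have hd1 : ∀ s ∈ Ioo a k, HasDerivAt f (deriv f s) s := fun s hs =>
    ((hC.differentiableOn (by norm_num)).differentiableAt (isOpen_Ioo.mem_nhds hs)).hasDerivAt
  have hC1 : ContDiffOn ℝ 1 (deriv f) (Ioo a k) :=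
    hC.deriv_of_isOpen isOpen_Ioo (by norm_num)
  have hd2 : ∀ s ∈ Ioo a k, HasDerivAt (deriv f) (deriv (deriv f) s) s := fun s hs =>
    ((hC1.differentiableOn (by norm_num)).differentiableAt (isOpen_Ioo.mem_nhds hs)).hasDerivAt
  set d : ℝ := c ^ 2 * (n : ℝ) ^ 2 with hd
  have hd0 : 0 ≤ d := by positivity
  have hbpos : ∀ s ∈ Ioo a k, 0 < bIII n c (f s) := fun s hs => bIII_pos n hn c hc _ (hneg s hs)
  have hu : ∀ s ∈ Ioo a k, HasDerivAt (fun s => deriv f s / bIII n c (f s) - d * s)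
      (-(d * (deriv f s / bIII n c (f s)) ^ 2)) s := by
    intro s hs
    have hb := (bIII_differentiable n c (f s)).hasDerivAt.comp s (hd1 s hs)
    have hne := (hbpos s hs).ne'
    have := ((hd2 s hs).div hb hne).sub ((hasDerivAt_id s).const_mul d)
    refine this.congr_deriv ?_
    rw [hode s hs]
    simp only [Function.comp]
    field_simp
    ring
  obtain ⟨s0, hs0a, hs0k⟩ := exists_between hak
  have hsub : ∀ s ∈ Ico s0 k, s ∈ Ioo a k := fun s hs => ⟨hs0a.trans_le hs.1, hs.2⟩
  have hinter : ∀ s ∈ interior (Ico s0 k), s ∈ Ioo a k := fun s hs => hsub s (interior_subset hs)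
  have hmem0 : s0 ∈ Ico s0 k := ⟨le_rfl, hs0k⟩
  have hanti : AntitoneOn (fun s => deriv f s / bIII n c (f s) - d * s) (Ico s0 k) := by
    refine antitoneOn_of_deriv_nonpos (convex_Ico _ _)
      (fun s hs => (hu s (hsub s hs)).continuousAt.continuousWithinAt)
      (fun s hs => (hu s (hinter s hs)).differentiableAt.differentiableWithinAt) ?_
    intro s hs
    rw [(hu s (hinter s hs)).deriv]
    have : 0 ≤ d * (deriv f s / bIII n c (f s)) ^ 2 := by positivity
    linarith
  set M : ℝ := max 0 (deriv f s0 / bIII n c (f s0) + d * (k - s0)) with hM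
  have hM0 : 0 ≤ M := le_max_left _ _
  have huM : ∀ s ∈ Ico s0 k, deriv f s / bIII n c (f s) ≤ M := by
    intro s hs
    refine le_trans ?_ (le_max_right _ _)
    have h1 := hanti hmem0 hs hs.1
    have h2 := mul_le_mul_of_nonneg_left hs.2.le hd0
    simp only at h1
    linarith
  set K : ℝ := M * (2 * n * c ^ 2) with hK
  have hfK : ∀ s ∈ Ico s0 k, deriv f s + K * f s ≤ 0 := by
    intro s hs
    have h1 := (div_le_iff₀ (hbpos s (hsub s hs))).1 (huM s hs)
    have h2 := mul_le_mul_of_nonneg_left (bIII_le n c hc _ (hneg s (hsub s hs))) hM0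
    rw [hK]
    linarith
  have hh : ∀ s ∈ Ioo a k, HasDerivAt (fun s => f s * Real.exp (K * s))
      ((deriv f s + K * f s) * Real.exp (K * s)) s := by
    intro s hs
    have := (hd1 s hs).mul (((hasDerivAt_id s).const_mul K).exp)
    refine this.congr_deriv ?_
    simp only [id]
    ring
  have hanti2 : AntitoneOn (fun s => f s * Real.exp (K * s)) (Ico s0 k) := by
    refine antitoneOn_of_deriv_nonpos (convex_Ico _ _)
      (fun s hs => (hh s (hsub s hs)).continuousAt.continuousWithinAt)
      (fun s hs => (hh s (hinter s hs)).differentiableAt.differentiableWithinAt) ?_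
    intro s hs
    rw [(hh s (hinter s hs)).deriv]
    exact mul_nonpos_of_nonpos_of_nonneg (hfK s (interior_subset hs)) (Real.exp_pos _).le
  have hlim2 : Tendsto (fun s => f s * Real.exp (K * s)) (𝓝[<] k) (𝓝 (0 * Real.exp (K * k))) := by
    refine hlim.mul ?_
    have : Continuous fun s : ℝ => Real.exp (K * s) := by fun_prop
    exact (this.tendsto k).mono_left nhdsWithin_le_nhds
  have hle : 0 * Real.exp (K * k) ≤ f s0 * Real.exp (K * s0) := by
    refine le_of_tendsto hlim2 ?_
    filter_upwards [Ico_mem_nhdsLT hs0k] with s hs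
    exact hanti2 hmem0 hs hs.1
  have := mul_neg_of_neg_of_pos (hneg s0 (hsub s0 hmem0)) (Real.exp_pos (K * s0))
  linarith

/-- Solutions of the type III Grim Reaper ODE on `(a₁, a₂)` do not blow up
to the `0`-axis in finite time: if `a₂` is finite then `f` does not tend to `0` at `a₂⁻`,
and if `a₁` is finite then `f` does not tend to `0` at `a₁⁺`. -/
theorem grimReaperIII_no_blowup_to_zero (n : ℕ) (hn : 1 ≤ n) (c : ℝ) (hc : 0 < c)
    (a₁ a₂ : EReal) (ha : a₁ < a₂) (f : ℝ → ℝ)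
    (hf : IsGrimReaperSolIII n c f {s : ℝ | a₁ < (s : EReal) ∧ (s : EReal) < a₂}) :
    (∀ k : ℝ, a₂ = (k : EReal) → ¬ Filter.Tendsto f (𝓝[<] k) (𝓝 0)) ∧
    (∀ k : ℝ, a₁ = (k : EReal) → ¬ Filter.Tendsto f (𝓝[>] k) (𝓝 0)) := by
  obtain ⟨hneg, hC, hode⟩ := hf
  constructor
  · rintro k rfl
    obtain ⟨a, ha1, ha2⟩ := EReal.lt_iff_exists_real_btwn.1 ha
    have hsub : Ioo a k ⊆ {s : ℝ | a₁ < (s : EReal) ∧ (s : EReal) < (k : EReal)} := fun s hs =>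
      ⟨ha1.trans (EReal.coe_lt_coe_iff.2 hs.1), EReal.coe_lt_coe_iff.2 hs.2⟩
    exact no_blowup_right n hn c hc a k (EReal.coe_lt_coe_iff.1 ha2) f
      ⟨fun s hs => hneg s (hsub hs), hC.mono hsub, fun s hs => hode s (hsub hs)⟩
  · rintro k rfl hlim
    obtain ⟨a, ha1, ha2⟩ := EReal.lt_iff_exists_real_btwn.1 ha
    have hsub : ∀ s ∈ Ioo (-a) (-k),
        -s ∈ {s : ℝ | (k : EReal) < (s : EReal) ∧ (s : EReal) < a₂} := fun s hs =>
      ⟨EReal.coe_lt_coe_iff.2 (by linarith [hs.2]),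
        (EReal.coe_lt_coe_iff.2 (by linarith [hs.1])).trans ha2⟩
    have hka : k < a := EReal.coe_lt_coe_iff.1 ha1
    have hder : deriv (fun x => f (-x)) = fun x => -deriv f (-x) := by
      funext x
      exact deriv_comp_neg f x
    refine no_blowup_right n hn c hc (-a) (-k) (by linarith) (fun x => f (-x))
      ⟨fun s hs => hneg _ (hsub s hs), hC.comp contDiff_neg.contDiffOn hsub, ?_⟩ ?_
    · intro s hs
      have h2 : deriv (fun x => -deriv f (-x)) s = deriv (deriv f) (-s) := by
        rw [deriv.fun_neg, deriv_comp_neg (deriv f) s, neg_neg]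
      rw [hder, h2, hode _ (hsub s hs)]
      ring
    · refine hlim.comp ?_
      refine tendsto_nhdsWithin_iff.2 ⟨?_, ?_⟩
      · have : Continuous fun x : ℝ => -x := continuous_neg
        have h := this.tendsto (-k)
        rw [neg_neg] at h
        exact h.mono_left nhdsWithin_le_nhds
      · filter_upwards [self_mem_nhdsWithin] with x hx
        have : x < -k := hx
        show k < -x
        linarith
end

section
/- Fix an integer n ≥ 1 and a real c > 0. Let L ⊆ ℝ be an open interval and f : L → (0, π/(2c)) a C² solution of the type II Grim Reaper ODE. If f'(s₀) = 0 for some s₀ ∈ L, then s₀ is a strict absolute maximum of f: for every s ∈ L with s ≠ s₀ one has f(s) < f(s₀). In particular, f has at most one critical point. -/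
open Real Set Filter Topology

theorem aux_no_localMin (n : ℕ) (hn : 1 ≤ n) (c : ℝ) (hc : 0 < c)
    (L : Set ℝ) (hLopen : IsOpen L)
    (f : ℝ → ℝ) (hf : IsGrimReaperSolII n c f L)
    (s : ℝ) (hs : s ∈ L) (hcrit : deriv f s = 0) :
    IsLocalMax f s ∧ ¬ IsLocalMin f s := by
  obtain ⟨h1, h2, h3⟩ := hf
  have hneg : deriv (deriv f) s < 0 := by
    rw [h3 s hs, hcrit]
    obtain ⟨ha, hb⟩ := h1 s hs
    have htan : 0 < Real.tan (c * f s) := by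
      apply Real.tan_pos_of_pos_of_lt_pi_div_two (by positivity)
      rw [lt_div_iff₀ (by positivity)] at hb
      linarith
    have hn' : (0 : ℝ) < n := by exact_mod_cast hn
    have hbp : 0 < bII n c (f s) := by unfold bII; positivity
    have : 0 < bII n c (f s) * (c ^ 2 * (n : ℝ) ^ 2) := by positivity
    simp
    linarith
  have hcont : ContinuousAt f s := (h2.continuousOn).continuousAt (hLopen.mem_nhds hs)
  have hmax := isLocalMax_of_deriv_deriv_neg hneg hcrit hcont
  refine ⟨hmax, fun hmin => ?_⟩
  have heq : f =ᶠ[𝓝 s] fun _ => f s := by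
    filter_upwards [hmax, hmin] with x a b using le_antisymm a b
  have := heq.deriv.deriv_eq
  simp at this
  linarith

/-- A critical point of a solution of the type II Grim Reaper ODE on an
open interval is a strict absolute maximum. -/
theorem grimReaperII_critical_point_is_strict_max (n : ℕ) (hn : 1 ≤ n) (c : ℝ) (hc : 0 < c)
    (L : Set ℝ) (hLopen : IsOpen L) (hLconn : L.OrdConnected)
    (f : ℝ → ℝ) (hf : IsGrimReaperSolII n c f L)
    (s₀ : ℝ) (hs₀ : s₀ ∈ L) (hcrit : deriv f s₀ = 0) :
    ∀ s ∈ L, s ≠ s₀ → f s < f s₀ := by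
  intro s hs hne
  by_contra! hge
  have hsub : Set.uIcc s₀ s ⊆ L := hLconn.uIcc_subset hs₀ hs
  have hmax := (aux_no_localMin n hn c hc L hLopen f hf s₀ hs₀ hcrit).1
  have key : ∀ m ∈ Set.Ioo (min s₀ s) (max s₀ s), ¬ IsMinOn f (Set.uIcc s₀ s) m := by
    intro m hm hmin
    have hloc : IsLocalMin f m := hmin.isLocalMin (Icc_mem_nhds hm.1 hm.2)
    exact (aux_no_localMin n hn c hc L hLopen f hf m (hsub (Ioo_subset_Icc_self hm))
      hloc.deriv_eq_zero).2 hloc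
  obtain ⟨m, hm, hmin⟩ := isCompact_uIcc.exists_isMinOn (nonempty_uIcc (a := s₀) (b := s))
    (hf.2.1.continuousOn.mono hsub)
  have hm0 : IsMinOn f (Set.uIcc s₀ s) s₀ := by
    have hends : f s₀ ≤ f m := by
      by_contra! hlt
      have e1 : m ≠ s₀ := by rintro rfl; exact lt_irrefl _ hlt
      have e2 : m ≠ s := by rintro rfl; linarith
      refine key m ?_ hmin
      rcases lt_or_gt_of_ne hne with h | h
      · rw [uIcc_of_ge h.le] at hm
        rw [min_eq_right h.le, max_eq_left h.le]
        exact ⟨lt_of_le_of_ne hm.1 e2.symm, lt_of_le_of_ne hm.2 e1⟩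
      · rw [uIcc_of_le h.le] at hm
        rw [min_eq_left h.le, max_eq_right h.le]
        exact ⟨lt_of_le_of_ne hm.1 e1.symm, lt_of_le_of_ne hm.2 e2⟩
    intro x hx
    exact hends.trans (hmin hx)
  have hex : ∃ x ∈ Set.Ioo (min s₀ s) (max s₀ s), f x ≤ f s₀ := by
    rcases lt_or_gt_of_ne hne with h | h
    · rw [min_eq_right h.le, max_eq_left h.le]
      have h1 : ∀ᶠ x in 𝓝[<] s₀, f x ≤ f s₀ := hmax.filter_mono nhdsWithin_le_nhds
      have h2 : ∀ᶠ x in 𝓝[<] s₀, x ∈ Set.Ioo s s₀ := Ioo_mem_nhdsLT h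
      exact (h2.and h1).exists
    · rw [min_eq_left h.le, max_eq_right h.le]
      have h1 : ∀ᶠ x in 𝓝[>] s₀, f x ≤ f s₀ := hmax.filter_mono nhdsWithin_le_nhds
      have h2 : ∀ᶠ x in 𝓝[>] s₀, x ∈ Set.Ioo s₀ s := Ioo_mem_nhdsGT h
      exact (h2.and h1).exists
  obtain ⟨x, hx, hfx⟩ := hex
  exact key x hx fun y hy => hfx.trans (hm0 hy)
end

section
/- Fix an integer n ≥ 1 and a real c > 0. Let f : (a, +∞) → (0, π/(2c)) be a C² solution of the type II Grim Reaper ODE, for some a ∈ ℝ ∪ {−∞}. Then the limit of f(s) as s → +∞ exists and equals either 0 or π/(2c). Likewise, if f is a solution defined on (−∞, a), then the limit of f(s) as s → −∞ exists and equals either 0 or π/(2c). -/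
open Real Set Filter Topology

lemma aux_growth (l r : ℝ) (hl : 0 < l) (w v : ℝ → ℝ)
    (hw : ∀ s, r < s → HasDerivAt w (v s) s)
    (hv : ∀ s, r < s → HasDerivAt v (l ^ 2 * w s) s)
    (h1 : ∀ s, r < s → 1 < w s) : Tendsto w atTop atTop := by
  have key : ∀ (k : ℝ), k ^ 2 = l ^ 2 → ∃ P : ℝ, ∀ s, r < s → v s + k * w s = P * exp (k * s) := by
    intro k hk
    let g : ℝ → ℝ := fun s => (v s + k * w s) * exp (-(k * s))
    have hg : ∀ s ∈ Ioi r, HasDerivAt g 0 s := by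
      intro s hs
      have he : HasDerivAt (fun s : ℝ => exp (-(k * s))) (exp (-(k * s)) * (-(k * 1))) s :=
        (((hasDerivAt_id s).const_mul k).neg).exp
      have := ((hv s hs).add ((hw s hs).const_mul k)).mul he
      refine HasDerivAt.congr_deriv this ?_
      simp only [Pi.add_apply]
      rw [← hk]; ring
    refine ⟨g (r + 1), fun s hs => ?_⟩
    have hc : g s = g (r + 1) := by
      refine isOpen_Ioi.is_const_of_deriv_eq_zero (s := Ioi r) isPreconnected_Ioi
        (fun x hx => (hg x hx).differentiableAt.differentiableWithinAt)
        (fun x hx => (hg x hx).deriv) hs (by simp)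
    rw [← hc]
    simp only [g]
    rw [mul_assoc, ← exp_add]; simp
  obtain ⟨P, hP⟩ := key l rfl
  obtain ⟨Q, hQ⟩ := key (-l) (by ring)
  have hform : ∀ s, r < s → w s = P / (2 * l) * exp (l * s) - Q / (2 * l) * exp (-l * s) := by
    intro s hs
    have a1 := hP s hs
    have a2 := hQ s hs
    rw [neg_mul] at a2 ⊢
    rw [neg_mul] at a2
    field_simp
    linarith
  have e1 : Tendsto (fun s : ℝ => exp (l * s)) atTop atTop :=
    tendsto_exp_atTop.comp (tendsto_id.const_mul_atTop hl)
  have e2 : Tendsto (fun s : ℝ => Q / (2 * l) * exp (-l * s)) atTop (𝓝 0) := by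
    have : Tendsto (fun s : ℝ => exp (-l * s)) atTop (𝓝 0) :=
      tendsto_exp_atBot.comp (tendsto_id.const_mul_atTop_of_neg (by linarith))
    simpa using this.const_mul (Q / (2 * l))
  have hev : w =ᶠ[atTop] fun s => P / (2 * l) * exp (l * s) - Q / (2 * l) * exp (-l * s) := by
    filter_upwards [eventually_gt_atTop r] with s hs using hform s hs
  have hPpos : 0 < P := by
    by_contra hn
    have h2 : ∀ᶠ s in atTop, |Q / (2 * l) * exp (-l * s)| < 1 := by
      have := e2.abs
      rw [abs_zero] at this
      exact this.eventually (gt_mem_nhds one_pos)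
    obtain ⟨s, hs, hs'⟩ := (h2.and (eventually_gt_atTop r)).exists
    have h3 := h1 s hs'
    rw [hform s hs'] at h3
    have h4 : P / (2 * l) * exp (l * s) ≤ 0 :=
      mul_nonpos_of_nonpos_of_nonneg
        (div_nonpos_of_nonpos_of_nonneg (not_lt.mp hn) (by positivity)) (exp_pos _).le
    have := (abs_lt.mp hs).1
    linarith
  rw [tendsto_congr' hev]
  have := (e1.const_mul_atTop (show 0 < P / (2 * l) by positivity)).atTop_add e2.neg
  simpa [sub_eq_add_neg] using this

lemma aux_deriv (n : ℕ) (hn : 1 ≤ n) (c : ℝ) (hc : 0 < c) (f : ℝ → ℝ) (L : Set ℝ) (hL : IsOpen L)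
    (h : IsGrimReaperSolII n c f L) (s : ℝ) (hs : s ∈ L) :
    HasDerivAt (fun s => ((sin (c * f s)) ^ n)⁻¹)
      (-(n * c) * (cos (c * f s) * deriv f s * (sin (c * f s) ^ (n + 1))⁻¹)) s ∧
    HasDerivAt (fun s => -(n * c) * (cos (c * f s) * deriv f s * (sin (c * f s) ^ (n + 1))⁻¹))
      ((c ^ 2 * n ^ 2) ^ 2 * ((sin (c * f s)) ^ n)⁻¹) s ∧
    1 < ((sin (c * f s)) ^ n)⁻¹ := by
  obtain ⟨hr, hC, hode⟩ := h
  have hCs : ContDiffAt ℝ 2 f s := hC.contDiffAt (hL.mem_nhds hs)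
  have hf : HasDerivAt f (deriv f s) s := (hCs.differentiableAt (by norm_num)).hasDerivAt
  have hf2 : HasDerivAt (deriv f) (deriv (deriv f) s) s := by
    have h1 : ContDiffOn ℝ 1 (deriv f) L :=
      ((contDiffOn_succ_iff_deriv_of_isOpen (n := 1) hL).1 (by rw [one_add_one_eq_two]; exact hC)).2.2
    exact ((h1.contDiffAt (hL.mem_nhds hs)).differentiableAt (by norm_num)).hasDerivAt
  obtain ⟨r1, r2⟩ := hr s hs
  have u0 : 0 < c * f s := by positivity
  have u1 : c * f s < π / 2 := by
    have := mul_lt_mul_of_pos_left r2 hc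
    have e : c * (π / (2 * c)) = π / 2 := by field_simp
    linarith
  have hsin : 0 < sin (c * f s) := sin_pos_of_pos_of_lt_pi u0 (by linarith [pi_pos])
  have hcos : 0 < cos (c * f s) := cos_pos_of_mem_Ioo ⟨by linarith [pi_pos], u1⟩
  have hsc := sin_sq_add_cos_sq (c * f s)
  have hb : deriv (bII n c) (f s) = n * c * (1 / cos (c * f s) ^ 2 * (c * 1)) := by
    have := ((hasDerivAt_tan hcos.ne').comp (f s) ((hasDerivAt_id (f s)).const_mul c)).const_mul
      ((n : ℝ) * c)
    exact this.deriv
  have hode' := hode s hs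
  rw [hb] at hode'
  simp only [bII, tan_eq_sin_div_cos] at hode'
  have hu : HasDerivAt (fun s => c * f s) (c * deriv f s) s := hf.const_mul c
  have hS := hu.sin
  have hCo := hu.cos
  have hn0 : (0 : ℝ) < n := by exact_mod_cast hn
  refine ⟨?_, ?_, ?_⟩
  · refine HasDerivAt.congr_deriv ((hS.pow n).inv (pow_pos hsin n).ne') ?_
    obtain ⟨m, rfl⟩ : ∃ m, n = m + 1 := ⟨n - 1, by omega⟩
    simp only [Nat.add_sub_cancel, Pi.pow_apply]
    field_simp
    ring
  · have := (((hCo.mul hf2).mul ((hS.pow (n + 1)).inv (pow_pos hsin (n + 1)).ne'))).const_mul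
      (-((n : ℝ) * c))
    refine HasDerivAt.congr_deriv this ?_
    simp only [Nat.add_sub_cancel, Pi.pow_apply, Pi.mul_apply, Pi.inv_apply]
    rw [hode']
    generalize sin (c * f s) = S at *
    generalize cos (c * f s) = C at *
    generalize deriv f s = d at *
    have hS2 : S ^ 2 = 1 - C ^ 2 := by linarith
    push_cast
    have hSn : S ^ n ≠ 0 := (pow_pos hsin n).ne'
    simp only [pow_succ S n]
    generalize S ^ n = T at *
    field_simp
    linear_combination d ^ 2 * hsc
  · rw [one_lt_inv₀ (pow_pos hsin n)]
    refine pow_lt_one₀ hsin.le ?_ (by omega)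
    nlinarith

lemma aux_limit (n : ℕ) (hn : 1 ≤ n) (c : ℝ) (hc : 0 < c) (f : ℝ → ℝ) (F : Filter ℝ)
    (hr : ∀ᶠ s in F, f s ∈ Ioo 0 (π / (2 * c)))
    (hw : Tendsto (fun s => ((sin (c * f s)) ^ n)⁻¹) F atTop) : Tendsto f F (𝓝 0) := by
  have h1 : Tendsto (fun s => (sin (c * f s)) ^ n) F (𝓝 0) := by
    simpa [Function.comp_def] using tendsto_inv_atTop_zero.comp hw
  have hn0 : (0 : ℝ) < n := by exact_mod_cast hn
  have h2 := h1.rpow_const (p := (n : ℝ)⁻¹) (Or.inr (by positivity))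
  rw [zero_rpow (by positivity)] at h2
  have h3 := h2.const_mul (π / (2 * c))
  rw [mul_zero] at h3
  refine tendsto_of_tendsto_of_tendsto_of_le_of_le' tendsto_const_nhds h3 ?_ ?_
  · filter_upwards [hr] with s hs using hs.1.le
  · filter_upwards [hr] with s hs
    obtain ⟨r1, r2⟩ := hs
    have u0 : 0 < c * f s := by positivity
    have u1 : c * f s < π / 2 := by
      have := mul_lt_mul_of_pos_left r2 hc
      have e : c * (π / (2 * c)) = π / 2 := by field_simp
      linarith
    have hsin : 0 < sin (c * f s) := sin_pos_of_pos_of_lt_pi u0 (by linarith [pi_pos])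
    rw [pow_rpow_inv_natCast hsin.le (by omega)]
    have hj := mul_le_sin u0.le u1.le
    have := mul_le_mul_of_nonneg_left hj (show 0 ≤ π / (2 * c) by positivity)
    have e : π / (2 * c) * (2 / π * (c * f s)) = f s := by field_simp
    linarith

/-- A solution of the type II Grim Reaper ODE defined on `(a, +∞)`
(with `a ∈ ℝ ∪ {-∞}`) has a limit at `+∞`, which is `0` or `π/(2c)`; likewise at `-∞`
for a solution defined on `(-∞, a)`. -/
theorem grimReaperII_limit_at_infinity (n : ℕ) (hn : 1 ≤ n) (c : ℝ) (hc : 0 < c) :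
    (∀ (a : EReal), a ≠ ⊤ → ∀ f : ℝ → ℝ,
      IsGrimReaperSolII n c f {s : ℝ | a < (s : EReal)} →
      Filter.Tendsto f Filter.atTop (𝓝 0) ∨
        Filter.Tendsto f Filter.atTop (𝓝 (π / (2 * c)))) ∧
    (∀ (a : EReal), a ≠ ⊥ → ∀ f : ℝ → ℝ,
      IsGrimReaperSolII n c f {s : ℝ | (s : EReal) < a} →
      Filter.Tendsto f Filter.atBot (𝓝 0) ∨
        Filter.Tendsto f Filter.atBot (𝓝 (π / (2 * c)))) := by
  have hn0 : (0 : ℝ) < n := by exact_mod_cast hn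
  have hl : 0 < c ^ 2 * (n : ℝ) ^ 2 := by positivity
  constructor
  · intro a ha f h
    left
    have hL : IsOpen {s : ℝ | a < (s : EReal)} :=
      isOpen_Ioi.preimage continuous_coe_real_ereal
    obtain ⟨r, hr, -⟩ := EReal.lt_iff_exists_real_btwn.1 (lt_top_iff_ne_top.2 ha)
    have hm : ∀ s : ℝ, r < s → s ∈ {s : ℝ | a < (s : EReal)} := fun s hs =>
      hr.trans (EReal.coe_lt_coe_iff.2 hs)
    have D := aux_deriv n hn c hc f _ hL h
    refine aux_limit n hn c hc f atTop ?_ ?_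
    · filter_upwards [eventually_gt_atTop r] with s hs using h.1 s (hm s hs)
    · exact aux_growth _ r hl _ _ (fun s hs => (D s (hm s hs)).1) (fun s hs => (D s (hm s hs)).2.1)
        (fun s hs => (D s (hm s hs)).2.2)
  · intro a ha f h
    left
    have hL : IsOpen {s : ℝ | (s : EReal) < a} :=
      isOpen_Iio.preimage continuous_coe_real_ereal
    obtain ⟨r, -, hr⟩ := EReal.lt_iff_exists_real_btwn.1 (bot_lt_iff_ne_bot.2 ha)
    have hm : ∀ s : ℝ, s < r → s ∈ {s : ℝ | (s : EReal) < a} := fun s hs =>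
      (EReal.coe_lt_coe_iff.2 hs).trans hr
    have D := aux_deriv n hn c hc f _ hL h
    refine aux_limit n hn c hc f atBot ?_ ?_
    · filter_upwards [eventually_lt_atBot r] with s hs using h.1 s (hm s hs)
    · have G := aux_growth _ (-r) hl (fun s => ((sin (c * f (-s))) ^ n)⁻¹)
        (fun s => -(-(n * c) * (cos (c * f (-s)) * deriv f (-s) * (sin (c * f (-s)) ^ (n + 1))⁻¹)))
        (fun s hs => by
          have := (D (-s) (hm (-s) (by linarith))).1.comp s (hasDerivAt_neg s)
          refine HasDerivAt.congr_deriv this ?_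
          ring)
        (fun s hs => by
          have := ((D (-s) (hm (-s) (by linarith))).2.1.comp s (hasDerivAt_neg s)).neg
          refine HasDerivAt.congr_deriv this ?_
          ring)
        (fun s hs => (D (-s) (hm (-s) (by linarith))).2.2)
      have := G.comp tendsto_neg_atBot_atTop
      simpa [Function.comp_def] using this
end

section
/- Fix an integer n ≥ 1 and a real c > 0. Let f : (a, +∞) → (−∞, 0) be a C² solution of the type III Grim Reaper ODE, for some a ∈ ℝ ∪ {−∞}. Then either f(s) tends to 0 as s → +∞, or f(s) tends to −∞ as s → +∞. Likewise, if f is a solution defined on (−∞, a), then as s → −∞, f(s) tends either to 0 or to −∞. -/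
open Real Set Filter Topology

lemma bIII_hasDerivAt (n : ℕ) (c y : ℝ) :
    HasDerivAt (bIII n c) (-((n : ℝ) * c * (c / (Real.cosh (c * y)) ^ 2))) y := by
  have h0 : HasDerivAt (fun y : ℝ => c * y) c y := by
    simpa using (hasDerivAt_id y).const_mul c
  have h1 := h0.sinh
  have h2 := h0.cosh
  have hC : Real.cosh (c * y) ≠ 0 := (Real.cosh_pos _).ne'
  have h3 := ((h1.div h2 hC).const_mul ((n : ℝ) * c)).neg
  have he : bIII n c =
      -fun y => (n : ℝ) * c * (((fun y => Real.sinh (c * y)) / fun y => Real.cosh (c * y)) y) := by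
    funext y
    simp [bIII, Real.tanh_eq_sinh_div_cosh]
  rw [he]
  refine h3.congr_deriv ?_
  have := Real.cosh_sq (c * y)
  congr 2
  field_simp
  rw [this]
  ring

lemma core (n : ℕ) (hn : 1 ≤ n) (c : ℝ) (hc : 0 < c) (a : ℝ) (f g : ℝ → ℝ)
    (hneg : ∀ s, a < s → f s < 0)
    (hf : ∀ s, a < s → HasDerivAt f (g s) s)
    (hg : ∀ s, a < s → HasDerivAt g
      ((1 - (g s) ^ 2 / (bIII n c (f s)) ^ 2) * bIII n c (f s) * (c ^ 2 * (n : ℝ) ^ 2)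
        + (deriv (bIII n c) (f s) / bIII n c (f s)) * (g s) ^ 2) s) :
    Tendsto f atTop (𝓝 0) ∨ Tendsto f atTop atBot := by
  have hn0 : (0 : ℝ) < n := by exact_mod_cast hn
  set S : ℝ → ℝ := fun s => Real.sinh (-(c * f s)) with hS
  set C : ℝ → ℝ := fun s => Real.cosh (-(c * f s)) with hC
  set U : ℝ → ℝ := fun s => ((S s) ^ n)⁻¹ with hU
  set V : ℝ → ℝ := fun s => n * c * C s * g s / (S s) ^ (n + 1) with hV
  set k : ℝ := (n : ℝ) ^ 2 * c ^ 2 with hk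
  have hkpos : 0 < k := by positivity
  have hSpos : ∀ s, a < s → 0 < S s := fun s hs => by
    apply Real.sinh_pos_iff.2
    nlinarith [hneg s hs]
  have hSd : ∀ s, a < s → HasDerivAt S (C s * (-(c * g s))) s := fun s hs =>
    (((hf s hs).const_mul c).neg).sinh
  have hCd : ∀ s, a < s → HasDerivAt C (S s * (-(c * g s))) s := fun s hs =>
    (((hf s hs).const_mul c).neg).cosh
  have hUd : ∀ s, a < s → HasDerivAt U (V s) s := fun s hs => by
    have hp := hSpos s hs
    refine (((hSd s hs).pow n).inv (pow_pos hp n).ne').congr_deriv ?_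
    obtain ⟨m, rfl⟩ : ∃ m, n = m + 1 := ⟨n - 1, by omega⟩
    simp only [hV, Pi.pow_apply, Nat.add_sub_cancel]
    field_simp
    try ring
  have hVd : ∀ s, a < s → HasDerivAt V (k ^ 2 * U s) s := fun s hs => by
    have hp := hSpos s hs
    have hCp : 0 < C s := Real.cosh_pos _
    refine ((((hCd s hs).const_mul ((n : ℝ) * c)).mul (hg s hs)).div
      ((hSd s hs).pow (n + 1)) (pow_pos hp _).ne').congr_deriv ?_
    have hb : bIII n c (f s) = n * c * S s / C s := by
      simp only [bIII, hS, hC, Real.tanh_eq_sinh_div_cosh, Real.sinh_neg, Real.cosh_neg]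
      ring
    have hb' : deriv (bIII n c) (f s) = -((n : ℝ) * c * (c / (C s) ^ 2)) := by
      rw [(bIII_hasDerivAt n c (f s)).deriv]
      simp only [hC, Real.cosh_neg]
    have hsq : C s ^ 2 = S s ^ 2 + 1 := Real.cosh_sq _
    rw [hb, hb']
    simp only [hU, hk, Pi.pow_apply, Pi.mul_apply, Nat.add_sub_cancel]
    push_cast
    generalize C s = x at *
    generalize S s = y at *
    generalize g s = z at *
    have hy : y ^ 2 = x ^ 2 - 1 := by linarith
    field_simp
    linear_combination (y * y ^ (n * 2) * z ^ 2) * hsq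
  -- solve the linear ODE
  have hexp : ∀ (r s : ℝ), HasDerivAt (fun t => Real.exp (r * t)) (Real.exp (r * s) * r) s :=
    fun r s => by
      have h0 : HasDerivAt (fun t : ℝ => r * t) r s := by
        simpa using (hasDerivAt_id s).const_mul r
      exact h0.exp
  have hconst : ∀ r : ℝ, r ^ 2 = k ^ 2 → ∃ A, ∀ s, a < s →
      (V s + r * U s) * Real.exp (-r * s) = A := fun r hr => by
    refine ⟨(V (a + 1) + r * U (a + 1)) * Real.exp (-r * (a + 1)), fun s hs => ?_⟩
    have hd : ∀ s, a < s →
        HasDerivAt (fun s => (V s + r * U s) * Real.exp (-r * s)) 0 s := fun s hs => by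
      refine (((hVd s hs).add ((hUd s hs).const_mul r)).mul (hexp (-r) s)).congr_deriv ?_
      simp only [Pi.add_apply]
      rw [← hr]
      ring
    exact (isOpen_Ioi (a := a)).is_const_of_deriv_eq_zero (convex_Ioi a).isPreconnected
      (fun s hs => (hd s hs).differentiableAt.differentiableWithinAt)
      (fun s hs => (hd s hs).deriv) hs (by simp : a + 1 ∈ Ioi a)
  obtain ⟨A, hA⟩ := hconst k rfl
  obtain ⟨B, hB⟩ := hconst (-k) (by ring)
  have hUeq : ∀ s, a < s → U s = (A * Real.exp (k * s) - B * Real.exp (-k * s)) / (2 * k) :=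
    fun s hs => by
      have e : Real.exp (-k * s) * Real.exp (k * s) = 1 := by
        rw [← Real.exp_add]; simp
      rw [← hA s hs, ← hB s hs, neg_neg, eq_div_iff (by positivity)]
      linear_combination (-2 * k * U s) * e
  have hUpos : ∀ s, a < s → 0 < U s := fun s hs => inv_pos.2 (pow_pos (hSpos s hs) n)
  have hks : Tendsto (fun s : ℝ => k * s) atTop atTop := tendsto_id.const_mul_atTop hkpos
  have t1 : Tendsto (fun s : ℝ => Real.exp (k * s)) atTop atTop := Real.tendsto_exp_atTop.comp hks
  have t2 : Tendsto (fun s : ℝ => Real.exp (-k * s)) atTop (𝓝 0) := by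
    have := Real.tendsto_exp_neg_atTop_nhds_zero.comp hks
    simpa [Function.comp_def] using this
  have t3 : Tendsto (fun s : ℝ => -(B * Real.exp (-k * s))) atTop (𝓝 0) := by
    simpa using (t2.const_mul B).neg
  have hev : ∀ᶠ s in atTop, a < s := eventually_gt_atTop a
  have hSroot : ∀ s, a < s → ((U s)⁻¹) ^ ((n : ℝ)⁻¹) = S s := fun s hs => by
    simp only [hU, inv_inv]
    exact Real.pow_rpow_inv_natCast (hSpos s hs).le (by omega)
  have hfS : ∀ s, -(Real.arsinh (S s)) / c = f s := fun s => by
    simp only [hS, Real.arsinh_sinh]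
    field_simp
  have h2k : 0 < (2 * k)⁻¹ := by positivity
  rcases lt_trichotomy A 0 with h | h | h
  · exfalso
    have : Tendsto (fun s => A * Real.exp (k * s) + -(B * Real.exp (-k * s))) atTop atBot :=
      (t1.const_mul_atTop_of_neg h).atBot_add t3
    obtain ⟨s, hs, h1⟩ := (hev.and (this.eventually_lt_atBot 0)).exists
    have := hUpos s hs
    rw [hUeq s hs, ← sub_eq_add_neg] at *
    have := div_neg_of_neg_of_pos h1 (by positivity : 0 < 2 * k)
    linarith
  · right
    have hU0 : Tendsto U atTop (𝓝 0) := by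
      have := t3.div_const (2 * k)
      rw [zero_div] at this
      refine this.congr' ?_
      filter_upwards [hev] with s hs
      rw [hUeq s hs, h]; ring
    have hUi : Tendsto (fun s => (U s)⁻¹) atTop atTop := by
      refine Tendsto.inv_tendsto_nhdsGT_zero (tendsto_nhdsWithin_iff.2 ⟨hU0, ?_⟩)
      filter_upwards [hev] with s hs using hUpos s hs
    have hSi : Tendsto S atTop atTop := by
      refine ((tendsto_rpow_atTop (inv_pos.2 hn0)).comp hUi).congr' ?_
      filter_upwards [hev] with s hs using hSroot s hs
    have har : Tendsto Real.arsinh atTop atTop := Real.sinhOrderIso.symm.tendsto_atTop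
    have := (tendsto_neg_atTop_atBot.comp (har.comp hSi)).atBot_div_const hc
    exact this.congr hfS
  · left
    have hUi : Tendsto U atTop atTop := by
      have := ((t1.const_mul_atTop h).atTop_add t3).atTop_div_const (by positivity : 0 < 2 * k)
      refine this.congr' ?_
      filter_upwards [hev] with s hs
      rw [hUeq s hs]; ring
    have hS0 : Tendsto S atTop (𝓝 0) := by
      have h0 : (0 : ℝ) = 0 ^ ((n : ℝ)⁻¹) := (Real.zero_rpow (inv_pos.2 hn0).ne').symm
      rw [h0]
      refine ((tendsto_inv_atTop_zero.comp hUi).rpow_const (Or.inr (inv_pos.2 hn0).le)).congr' ?_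
      filter_upwards [hev] with s hs using hSroot s hs
    have := (((Real.continuous_arsinh.tendsto 0).comp hS0).neg).div_const c
    simp only [Real.arsinh_zero, neg_zero, zero_div] at this
    exact this.congr hfS

lemma sol_deriv {n : ℕ} {c : ℝ} {f : ℝ → ℝ} {L : Set ℝ} (hL : IsOpen L)
    (h : IsGrimReaperSolIII n c f L) {s : ℝ} (hs : s ∈ L) :
    HasDerivAt f (deriv f s) s ∧ HasDerivAt (deriv f) (deriv (deriv f) s) s := by
  have h2 := h.2.1
  refine ⟨((h2.differentiableOn (by norm_num)).differentiableAt (hL.mem_nhds hs)).hasDerivAt, ?_⟩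
  have h3 : ContDiffOn ℝ 1 (deriv f) L := h2.deriv_of_isOpen hL (by norm_num)
  exact ((h3.differentiableOn (by norm_num)).differentiableAt (hL.mem_nhds hs)).hasDerivAt

/-- A solution of the type III Grim Reaper ODE defined on `(a, +∞)`
(with `a ∈ ℝ ∪ {-∞}`) tends either to `0` or to `-∞` as `s → +∞`; likewise at `-∞`
for a solution defined on `(-∞, a)`. -/
theorem grimReaperIII_limit_at_infinity (n : ℕ) (hn : 1 ≤ n) (c : ℝ) (hc : 0 < c) :
    (∀ (a : EReal), a ≠ ⊤ → ∀ f : ℝ → ℝ,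
      IsGrimReaperSolIII n c f {s : ℝ | a < (s : EReal)} →
      Filter.Tendsto f Filter.atTop (𝓝 0) ∨
        Filter.Tendsto f Filter.atTop Filter.atBot) ∧
    (∀ (a : EReal), a ≠ ⊥ → ∀ f : ℝ → ℝ,
      IsGrimReaperSolIII n c f {s : ℝ | (s : EReal) < a} →
      Filter.Tendsto f Filter.atBot (𝓝 0) ∨
        Filter.Tendsto f Filter.atBot Filter.atBot) := by
  refine ⟨fun a ha f h => ?_, fun a ha f h => ?_⟩
  · have hL : IsOpen {s : ℝ | a < (s : EReal)} :=
      isOpen_Ioi.preimage continuous_coe_real_ereal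
    obtain ⟨r, hr, -⟩ := EReal.lt_iff_exists_real_btwn.1 (lt_top_iff_ne_top.2 ha)
    have hm : ∀ s : ℝ, r < s → s ∈ {s : ℝ | a < (s : EReal)} := fun s hs =>
      hr.trans (EReal.coe_lt_coe_iff.2 hs)
    refine core n hn c hc r f (deriv f) (fun s hs => h.1 s (hm s hs))
      (fun s hs => (sol_deriv hL h (hm s hs)).1) (fun s hs => ?_)
    rw [← h.2.2 s (hm s hs)]
    exact (sol_deriv hL h (hm s hs)).2
  · have hL : IsOpen {s : ℝ | (s : EReal) < a} :=
      isOpen_Iio.preimage continuous_coe_real_ereal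
    obtain ⟨r, -, hr⟩ := EReal.lt_iff_exists_real_btwn.1 (bot_lt_iff_ne_bot.2 ha)
    have hm : ∀ s : ℝ, -r < s → -s ∈ {s : ℝ | (s : EReal) < a} := fun s hs =>
      (EReal.coe_lt_coe_iff.2 (by linarith : -s < r)).trans hr
    have key := core n hn c hc (-r) (fun s => f (-s)) (fun s => -deriv f (-s))
      (fun s hs => h.1 _ (hm s hs))
      (fun s hs => by
        have := (sol_deriv hL h (hm s hs)).1.comp s (hasDerivAt_neg s)
        simpa [Function.comp_def] using this)
      (fun s hs => by
        have := ((sol_deriv hL h (hm s hs)).2.comp s (hasDerivAt_neg s)).neg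
        refine this.congr_deriv ?_
        rw [h.2.2 _ (hm s hs)]
        ring)
    refine key.imp (fun k => ?_) (fun k => ?_)
    all_goals
      have := k.comp tendsto_neg_atBot_atTop
      simpa [Function.comp_def] using this
end

section
/- Let I ⊆ ℝ be an open interval, b : I → (0, ∞) a smooth positive function, and d ∈ ℝ. Let J ⊆ I be an open interval and ξ : J → ℝ a C² solution of the inverse Grim Reaper ODE ξ''(y) = ξ'(y)·[ (1/b(y)² − ξ'(y)²)·d·b(y) − b'(y)/b(y) ]. If ξ'(y₀) = 0 for some y₀ ∈ J, then ξ is constant on J. In particular, there are no wing-like solutions: a nonconstant solution of the inverse Grim Reaper ODE has nowhere-vanishing derivative. -/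
open Real Set Filter Topology

theorem linear_ode_zero (J : Set ℝ) (hJconn : J.OrdConnected) (p c : ℝ → ℝ)
    (hc : ContinuousOn c J) (hp : ∀ y ∈ J, HasDerivAt p (p y * c y) y)
    (y₀ : ℝ) (hy₀ : y₀ ∈ J) (h0 : p y₀ = 0) : ∀ y ∈ J, p y = 0 := by
  have key : ∀ u v : ℝ, Icc u v ⊆ J → ∃ K : NNReal, ∀ t ∈ Icc u v,
      LipschitzOnWith K (fun x : ℝ => x * c t) univ := by
    intro u v huv
    obtain ⟨C, hC⟩ := isCompact_Icc.exists_bound_of_continuousOn (hc.mono huv)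
    refine ⟨C.toNNReal, fun t ht => ?_⟩
    apply LipschitzOnWith.of_dist_le_mul
    intro x _ y _
    have h1 : ‖c t‖ ≤ (C.toNNReal : ℝ) := (hC t ht).trans (Real.le_coe_toNNReal C)
    rw [Real.dist_eq, Real.dist_eq, ← sub_mul, abs_mul, mul_comm]
    exact mul_le_mul_of_nonneg_right h1 (abs_nonneg _)
  have hz : ∀ t, HasDerivAt (fun _ : ℝ => (0 : ℝ)) ((fun x : ℝ => x * c t) 0) t := by
    intro t
    simpa using hasDerivAt_const t (0 : ℝ)
  intro y hy
  rcases le_total y₀ y with h | h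
  · have hs := hJconn.out hy₀ hy
    obtain ⟨K, hK⟩ := key _ _ hs
    exact ODE_solution_unique_of_mem_Icc_right (v := fun t x => x * c t) (s := fun _ => univ)
      (g := fun _ => 0)
      (fun t ht => hK t (Ico_subset_Icc_self ht))
      (fun t ht => (hp t (hs ht)).continuousAt.continuousWithinAt)
      (fun t ht => (hp t (hs (Ico_subset_Icc_self ht))).hasDerivWithinAt)
      (fun _ _ => trivial) continuousOn_const
      (fun t _ => (hz t).hasDerivWithinAt) (fun _ _ => trivial) h0 ⟨h, le_rfl⟩
  · have hs := hJconn.out hy hy₀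
    obtain ⟨K, hK⟩ := key _ _ hs
    exact ODE_solution_unique_of_mem_Icc_left (v := fun t x => x * c t) (s := fun _ => univ)
      (g := fun _ => 0)
      (fun t ht => hK t (Ioc_subset_Icc_self ht))
      (fun t ht => (hp t (hs ht)).continuousAt.continuousWithinAt)
      (fun t ht => (hp t (hs (Ioc_subset_Icc_self ht))).hasDerivWithinAt)
      (fun _ _ => trivial) continuousOn_const
      (fun t _ => (hz t).hasDerivWithinAt) (fun _ _ => trivial) h0 ⟨le_rfl, h⟩

theorem grim_const (b : ℝ → ℝ) (d : ℝ)
    (J : Set ℝ) (hJopen : IsOpen J) (hJconn : J.OrdConnected)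
    (hb : ContDiffOn ℝ 1 b J) (hbpos : ∀ y ∈ J, 0 < b y)
    (ξ : ℝ → ℝ) (hξ : ContDiffOn ℝ 2 ξ J)
    (hode : ∀ y ∈ J,
      deriv (deriv ξ) y =
        deriv ξ y * ((1 / (b y) ^ 2 - (deriv ξ y) ^ 2) * d * b y - deriv b y / b y))
    (y₀ : ℝ) (hy₀ : y₀ ∈ J) (hcrit : deriv ξ y₀ = 0) : ∀ y ∈ J, ξ y = ξ y₀ := by
  have hd : ContDiffOn ℝ 1 (deriv ξ) J := hξ.deriv_of_isOpen hJopen (by norm_num)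
  have hb' : ContinuousOn (deriv b) J := hb.continuousOn_deriv_of_isOpen hJopen le_rfl
  have hbc := hb.continuousOn
  have hdc := hd.continuousOn
  have hz := linear_ode_zero J hJconn (deriv ξ)
    (fun y => (1 / (b y) ^ 2 - (deriv ξ y) ^ 2) * d * b y - deriv b y / b y)
    (by
      refine ContinuousOn.sub (((ContinuousOn.sub (continuousOn_const.div (hbc.pow 2) ?_)
        (hdc.pow 2)).mul continuousOn_const).mul hbc) (hb'.div hbc ?_)
      · intro y hy; exact pow_ne_zero 2 (hbpos y hy).ne'
      · intro y hy; exact (hbpos y hy).ne')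
    (by
      intro y hy
      simp only [← hode y hy]
      exact ((hd.differentiableOn one_ne_zero).differentiableAt
        (hJopen.mem_nhds hy)).hasDerivAt)
    y₀ hy₀ hcrit
  intro y hy
  exact hJopen.is_const_of_deriv_eq_zero hJconn.isPreconnected
    (hξ.differentiableOn two_ne_zero) hz hy hy₀

/-- If a `C²` solution of the inverse Grim Reaper ODE has a critical
point, it is constant; in particular there are no wing-like solutions: a nonconstant
solution has nowhere-vanishing derivative. -/
theorem grimReaper_inverse_ODE_no_winglike
    (I : Set ℝ) (hIopen : IsOpen I) (hIconn : I.OrdConnected)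
    (b : ℝ → ℝ) (hb : ContDiffOn ℝ (⊤ : ℕ∞) b I) (hbpos : ∀ y ∈ I, 0 < b y)
    (d : ℝ)
    (J : Set ℝ) (hJopen : IsOpen J) (hJconn : J.OrdConnected) (hJI : J ⊆ I)
    (ξ : ℝ → ℝ) (hξ : ContDiffOn ℝ 2 ξ J)
    (hode : ∀ y ∈ J,
      deriv (deriv ξ) y =
        deriv ξ y * ((1 / (b y) ^ 2 - (deriv ξ y) ^ 2) * d * b y - deriv b y / b y))
    (y₀ : ℝ) (hy₀ : y₀ ∈ J) (hcrit : deriv ξ y₀ = 0) :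
    (∀ y ∈ J, ξ y = ξ y₀) ∧
    ∀ η : ℝ → ℝ, ContDiffOn ℝ 2 η J →
      (∀ y ∈ J,
        deriv (deriv η) y =
          deriv η y * ((1 / (b y) ^ 2 - (deriv η y) ^ 2) * d * b y - deriv b y / b y)) →
      (¬ ∃ k : ℝ, ∀ y ∈ J, η y = k) →
      ∀ y ∈ J, deriv η y ≠ 0 := by
  have hb1 : ContDiffOn ℝ 1 b J := (hb.mono hJI).of_le (by exact_mod_cast le_top)
  have hbp : ∀ y ∈ J, 0 < b y := fun y hy => hbpos y (hJI hy)
  refine ⟨grim_const b d J hJopen hJconn hb1 hbp ξ hξ hode y₀ hy₀ hcrit, ?_⟩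
  intro η hη hη' hne y hy h0
  exact hne ⟨η y, grim_const b d J hJopen hJconn hb1 hbp η hη hη' y hy h0⟩
end

section
/- Fix an integer n ≥ 1, a real c > 0, a constant c₁ ∈ ℝ, and a sign σ ∈ {+1, −1}. Define β(y) = σ / ( tan(c·y) · sqrt( c²·n² + c₁·sin(c·y)^{2n} ) ) on the open set U = { y ∈ (0, π/(2c)) : c²·n² + c₁·sin(c·y)^{2n} > 0 }. Then β is differentiable on U and satisfies β'(y) = β(y)·[ (1/b_II(y)² − β(y)²)·d_II·b_II(y) − b_II'(y)/b_II(y) ] for all y ∈ U, where b_II(y) = n·c·tan(c·y) and d_II = −c²·n². -/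
open Real Set Filter Topology

/-- The explicit solution `β(y) = σ / (tan(c·y)·√(c²n² + c₁·sin(c·y)^{2n}))`. -/
noncomputable def betaII (n : ℕ) (c c₁ σ : ℝ) : ℝ → ℝ := fun y =>
  σ / (Real.tan (c * y) * Real.sqrt (c ^ 2 * (n : ℝ) ^ 2 + c₁ * Real.sin (c * y) ^ (2 * n)))

/-- For `σ = ±1`, the function `β` is differentiable on
`U = {y ∈ (0, π/(2c)) : c²n² + c₁·sin(c·y)^{2n} > 0}` and satisfies there the first-order
ODE `β' = β·[(1/b_II² − β²)·d_II·b_II − b_II'/b_II]`, with `d_II = -c²n²`. -/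
theorem betaII_solves_ODE (n : ℕ) (hn : 1 ≤ n) (c : ℝ) (hc : 0 < c)
    (c₁ σ : ℝ) (hσ : σ = 1 ∨ σ = -1) :
    ∀ y ∈ {y ∈ Set.Ioo 0 (π / (2 * c)) |
        0 < c ^ 2 * (n : ℝ) ^ 2 + c₁ * Real.sin (c * y) ^ (2 * n)},
      HasDerivAt (betaII n c c₁ σ)
        (betaII n c c₁ σ y *
          ((1 / (bII n c y) ^ 2 - (betaII n c c₁ σ y) ^ 2) * (-(c ^ 2 * (n : ℝ) ^ 2))
              * bII n c y
            - deriv (bII n c) y / bII n c y)) y := by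
  rintro y ⟨⟨hy0, hy1⟩, hQ⟩
  have hcy0 : 0 < c * y := mul_pos hc hy0
  have hcy1 : c * y < π / 2 := by
    rw [lt_div_iff₀ (by positivity)] at hy1
    linarith
  have hs : 0 < Real.sin (c * y) := Real.sin_pos_of_pos_of_lt_pi hcy0 (by linarith [Real.pi_pos])
  have hco : 0 < Real.cos (c * y) := Real.cos_pos_of_mem_Ioo ⟨by linarith, hcy1⟩
  have hn0 : (n : ℝ) ≠ 0 := by
    have : n ≠ 0 := by omega
    exact_mod_cast this
  have hlin : HasDerivAt (fun y : ℝ => c * y) c y := by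
    simpa using (hasDerivAt_id y).const_mul c
  have htan : HasDerivAt (fun y : ℝ => Real.tan (c * y)) (1 / Real.cos (c * y) ^ 2 * c) y :=
    (Real.hasDerivAt_tan hco.ne').comp y hlin
  have hb : deriv (bII n c) y = n * c * (1 / Real.cos (c * y) ^ 2 * c) :=
    (htan.const_mul ((n : ℝ) * c)).deriv
  have hsin : HasDerivAt (fun y : ℝ => Real.sin (c * y)) (Real.cos (c * y) * c) y := hlin.sin
  have hQd := ((hsin.pow (2 * n)).const_mul c₁).const_add (c ^ 2 * (n : ℝ) ^ 2)
  have hR := hQd.sqrt hQ.ne'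
  have ht : 0 < Real.tan (c * y) := by rw [Real.tan_eq_sin_div_cos]; positivity
  have hRp := Real.sqrt_pos.2 hQ
  have hβ := (hasDerivAt_const y σ).div (htan.mul hR) (mul_pos ht hRp).ne'
  refine HasDerivAt.congr_deriv hβ ?_
  rw [hb]
  simp only [betaII, bII, Pi.mul_apply, Pi.pow_apply]
  have hRR := Real.sq_sqrt hQ.le
  have hσ2 : σ ^ 2 = 1 := by rcases hσ with h | h <;> simp [h]
  obtain ⟨m, rfl⟩ : ∃ m, n = m + 1 := ⟨n - 1, by omega⟩
  have e1 : 2 * (m + 1) - 1 = 2 * m + 1 := by omega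
  have e2 : 2 * (m + 1) = 2 * m + 1 + 1 := by omega
  rw [e1]
  have ep : Real.sin (c * y) ^ (2 * (m + 1)) =
      Real.sin (c * y) ^ (2 * m + 1) * Real.sin (c * y) := by rw [e2, pow_succ]
  simp only [ep] at hRR hRp ⊢
  push_cast at hRR hRp hn0 ⊢
  rw [Real.tan_eq_sin_div_cos]
  clear hβ hR hQd hsin hb htan hlin hQ
  generalize Real.sin (c * y) ^ (2 * m + 1) = p at *
  generalize Real.sin (c * y) = s at *
  generalize Real.cos (c * y) = k at *
  generalize (m : ℝ) + 1 = N at *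
  generalize Real.sqrt (c ^ 2 * N ^ 2 + c₁ * (p * s)) = R at *
  have hp : c₁ * p = (R ^ 2 - c ^ 2 * N ^ 2) / s := by
    field_simp; linarith
  have h2 : c₁ * (2 * N * p * (k * c)) = 2 * N * k * c * ((R ^ 2 - c ^ 2 * N ^ 2) / s) := by
    rw [← hp]; ring
  simp only [h2, div_pow, hσ2]
  field_simp
  ring
end

section
/- Fix an integer n ≥ 1, a real c > 0, a constant c₁ ∈ ℝ, and a sign σ ∈ {+1, −1}. Define β(y) = σ / ( tanh(c·y) · sqrt( c²·n² + c₁·sinh(c·y)^{2n} ) ) on the open set U = { y ∈ (−∞, 0) : c²·n² + c₁·sinh(c·y)^{2n} > 0 }. Then β is differentiable on U and satisfies β'(y) = β(y)·[ (1/b_III(y)² − β(y)²)·d_III·b_III(y) − b_III'(y)/b_III(y) ] for all y ∈ U, where b_III(y) = −n·c·tanh(c·y) and d_III = c²·n². -/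
open Real Set Filter Topology

/-- The explicit solution `β(y) = σ / (tanh(c·y)·√(c²n² + c₁·sinh(c·y)^{2n}))`. -/
noncomputable def betaIII (n : ℕ) (c c₁ σ : ℝ) : ℝ → ℝ := fun y =>
  σ / (Real.tanh (c * y) * Real.sqrt (c ^ 2 * (n : ℝ) ^ 2 + c₁ * Real.sinh (c * y) ^ (2 * n)))

/-- For `σ = ±1`, the function `β` is differentiable on
`U = {y ∈ (-∞, 0) : c²n² + c₁·sinh(c·y)^{2n} > 0}` and satisfies there the first-order
ODE `β' = β·[(1/b_III² − β²)·d_III·b_III − b_III'/b_III]`, with `d_III = c²n²`. -/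
theorem betaIII_solves_ODE (n : ℕ) (hn : 1 ≤ n) (c : ℝ) (hc : 0 < c)
    (c₁ σ : ℝ) (hσ : σ = 1 ∨ σ = -1) :
    ∀ y ∈ {y ∈ Set.Iio (0 : ℝ) |
        0 < c ^ 2 * (n : ℝ) ^ 2 + c₁ * Real.sinh (c * y) ^ (2 * n)},
      HasDerivAt (betaIII n c c₁ σ)
        (betaIII n c c₁ σ y *
          ((1 / (bIII n c y) ^ 2 - (betaIII n c c₁ σ y) ^ 2) * (c ^ 2 * (n : ℝ) ^ 2)
              * bIII n c y
            - deriv (bIII n c) y / bIII n c y)) y := by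
  rintro y ⟨hy, hP⟩
  have hy0 : c * y < 0 := mul_neg_of_pos_of_neg hc hy
  have hs : Real.sinh (c * y) ≠ 0 := (Real.sinh_neg_iff.2 hy0).ne
  have hch : Real.cosh (c * y) ≠ 0 := (Real.cosh_pos _).ne'
  have hn0 : (n : ℝ) ≠ 0 := by positivity
  have hlin : HasDerivAt (fun y : ℝ => c * y) c y := by
    simpa using (hasDerivAt_id y).const_mul c
  have hS : HasDerivAt (fun y : ℝ => Real.sinh (c * y)) (Real.cosh (c * y) * c) y := hlin.sinh
  have hC : HasDerivAt (fun y : ℝ => Real.cosh (c * y)) (Real.sinh (c * y) * c) y := hlin.cosh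
  obtain ⟨T', hT⟩ : ∃ T', HasDerivAt (fun y : ℝ => Real.tanh (c * y)) T' y := by
    refine ⟨_, (hS.div hC hch).congr_of_eventuallyEq (Eventually.of_forall fun z => ?_)⟩
    simp [Real.tanh_eq_sinh_div_cosh]
  have ht : Real.tanh (c * y) ≠ 0 := by
    rw [Real.tanh_eq_sinh_div_cosh]; exact div_ne_zero hs hch
  have hb : deriv (bIII n c) y = -((n : ℝ) * c * T') := (hT.const_mul ((n : ℝ) * c)).neg.deriv
  have hPd := ((hS.pow (2 * n)).const_mul c₁).const_add (c ^ 2 * (n : ℝ) ^ 2)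
  have hR := hPd.sqrt hP.ne'
  have hR0 := Real.sqrt_pos.2 hP
  have hRsq := Real.sq_sqrt hP.le
  have key : c₁ * (((2 * n : ℕ) : ℝ) * Real.sinh (c * y) ^ (2 * n - 1) * (Real.cosh (c * y) * c))
      * Real.tanh (c * y)
      = 2 * n * c * (√(c ^ 2 * (n : ℝ) ^ 2 + c₁ * Real.sinh (c * y) ^ (2 * n)) ^ 2
          - c ^ 2 * (n : ℝ) ^ 2) := by
    rw [hRsq, Real.tanh_eq_sinh_div_cosh]
    have : Real.sinh (c * y) ^ (2 * n) = Real.sinh (c * y) ^ (2 * n - 1) * Real.sinh (c * y) := by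
      rw [← pow_succ]; congr 1; omega
    rw [this]
    push_cast
    field_simp
    ring
  have hσ2 : σ ^ 2 = 1 := by rcases hσ with h | h <;> simp [h]
  have hβ := (hasDerivAt_const y σ).div (hT.mul hR) (mul_ne_zero ht hR0.ne')
  refine HasDerivAt.congr_deriv (f := betaIII n c c₁ σ) hβ ?_
  rw [hb]
  simp only [betaIII, bIII, Pi.mul_apply, Pi.pow_apply] at *
  generalize √(c ^ 2 * (n : ℝ) ^ 2 + c₁ * Real.sinh (c * y) ^ (2 * n)) = R at *
  generalize Real.tanh (c * y) = t at *
  generalize c₁ * (((2 * n : ℕ) : ℝ) * Real.sinh (c * y) ^ (2 * n - 1) * (Real.cosh (c * y) * c))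
    = Q at *
  have hQ : Q = 2 * n * c * (R ^ 2 - c ^ 2 * (n : ℝ) ^ 2) / t := by
    rw [← key]; field_simp
  have hR1 := hR0.ne'
  have e : (σ / (t * R)) ^ 2 = 1 / (t * R) ^ 2 := by rw [div_pow, hσ2]
  rw [e, hQ]
  field_simp
  ring
end

section
/- Fix an integer n ≥ 1, a real c > 0, and a constant c₁ ∈ ℝ with c₁ > −c²·n². Let y₀ ∈ (0, π/(2c)) and define g(y) = 1 / ( tan(c·y) · sqrt( c²·n² + c₁·sin(c·y)^{2n} ) ). Then c²·n² + c₁·sin(c·y)^{2n} > 0 for all y ∈ (0, π/(2c)), the function g is Lebesgue integrable on the interval (y₀, π/(2c)), and g is not Lebesgue integrable on the interval (0, y₀). -/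
open Real Set Filter Topology MeasureTheory

/-- For `c₁ > -c²n²`, the quantity `c²n² + c₁·sin(c·y)^{2n}` is positive
on `(0, π/(2c))`, and `g(y) = 1/(tan(c·y)·√(c²n² + c₁·sin(c·y)^{2n}))` is Lebesgue
integrable on `(y₀, π/(2c))` but not on `(0, y₀)`. -/
theorem betaII_integrability (n : ℕ) (hn : 1 ≤ n) (c : ℝ) (hc : 0 < c)
    (c₁ : ℝ) (hc₁ : -(c ^ 2 * (n : ℝ) ^ 2) < c₁)
    (y₀ : ℝ) (hy₀ : y₀ ∈ Set.Ioo 0 (π / (2 * c))) :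
    (∀ y ∈ Set.Ioo 0 (π / (2 * c)),
      0 < c ^ 2 * (n : ℝ) ^ 2 + c₁ * Real.sin (c * y) ^ (2 * n)) ∧
    MeasureTheory.IntegrableOn
      (fun y => 1 / (Real.tan (c * y) *
        Real.sqrt (c ^ 2 * (n : ℝ) ^ 2 + c₁ * Real.sin (c * y) ^ (2 * n))))
      (Set.Ioo y₀ (π / (2 * c))) ∧
    ¬ MeasureTheory.IntegrableOn
      (fun y => 1 / (Real.tan (c * y) *
        Real.sqrt (c ^ 2 * (n : ℝ) ^ 2 + c₁ * Real.sin (c * y) ^ (2 * n))))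
      (Set.Ioo 0 y₀) := by
  have hn0 : (0:ℝ) < n := by exact_mod_cast hn
  have hcn : 0 < c ^ 2 * (n : ℝ) ^ 2 := by positivity
  have hD : ∀ y : ℝ, 0 < c ^ 2 * (n : ℝ) ^ 2 + c₁ * Real.sin (c * y) ^ (2 * n) := by
    intro y
    have h0 : 0 ≤ Real.sin (c * y) ^ (2 * n) := by rw [pow_mul]; positivity
    have h1 : Real.sin (c * y) ^ (2 * n) ≤ 1 := by
      rw [pow_mul]; exact pow_le_one₀ (sq_nonneg _) (Real.sin_sq_le_one _)
    rcases le_or_gt 0 c₁ with h | h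
    · have := mul_nonneg h h0
      linarith
    · nlinarith
  have hDM : ∀ y : ℝ, c ^ 2 * (n : ℝ) ^ 2 + c₁ * Real.sin (c * y) ^ (2 * n)
      ≤ c ^ 2 * (n : ℝ) ^ 2 + |c₁| := by
    intro y
    have h0 : 0 ≤ Real.sin (c * y) ^ (2 * n) := by rw [pow_mul]; positivity
    have h1 : Real.sin (c * y) ^ (2 * n) ≤ 1 := by
      rw [pow_mul]; exact pow_le_one₀ (sq_nonneg _) (Real.sin_sq_le_one _)
    have h2 := mul_le_mul_of_nonneg_right (le_abs_self c₁) h0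
    have h3 := mul_le_mul_of_nonneg_left h1 (abs_nonneg c₁)
    linarith
  obtain ⟨hy0, hy1⟩ := hy₀
  have hb : ∀ y : ℝ, y ≤ π / (2 * c) → c * y ≤ π / 2 := by
    intro y hy
    rw [le_div_iff₀ (by positivity)] at hy
    linarith
  have hy2 : c * y₀ < π / 2 := by
    rw [lt_div_iff₀ (by positivity)] at hy1
    linarith
  have hg : (fun y => 1 / (Real.tan (c * y) *
        Real.sqrt (c ^ 2 * (n : ℝ) ^ 2 + c₁ * Real.sin (c * y) ^ (2 * n)))) =
      fun y => Real.cos (c * y) / (Real.sin (c * y) *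
        Real.sqrt (c ^ 2 * (n : ℝ) ^ 2 + c₁ * Real.sin (c * y) ^ (2 * n))) := by
    funext y
    rw [Real.tan_eq_sin_div_cos, div_mul_eq_mul_div, one_div_div]
  refine ⟨fun y _ => hD y, ?_, ?_⟩
  · rw [hg]
    refine IntegrableOn.mono_set (t := Set.Icc y₀ (π / (2 * c))) ?_ Set.Ioo_subset_Icc_self
    apply ContinuousOn.integrableOn_Icc
    apply ContinuousOn.div (by fun_prop) (by fun_prop)
    intro y hy
    have h1 := hb y hy.2
    have h2 : 0 < c * y := mul_pos hc (lt_of_lt_of_le hy0 hy.1)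
    exact (mul_pos (Real.sin_pos_of_pos_of_lt_pi h2 (by linarith [Real.pi_pos]))
      (Real.sqrt_pos.2 (hD y))).ne'
  · rw [hg]
    intro H
    have hm : 0 < Real.cos (c * y₀) :=
      Real.cos_pos_of_mem_Ioo ⟨by linarith [mul_pos hc hy0, Real.pi_pos], hy2⟩
    have key : IntegrableOn (fun y : ℝ => y⁻¹) (Set.Ioo 0 y₀) := by
      refine Integrable.mono' (H.const_mul
        (c * Real.sqrt (c ^ 2 * (n : ℝ) ^ 2 + |c₁|) / Real.cos (c * y₀)))
        (by fun_prop) ?_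
      refine (ae_restrict_iff' measurableSet_Ioo).2 (Eventually.of_forall ?_)
      rintro y ⟨h1, h2⟩
      have h3 : 0 < c * y := mul_pos hc h1
      have h4 : c * y < c * y₀ := mul_lt_mul_of_pos_left h2 hc
      have hs : 0 < Real.sin (c * y) :=
        Real.sin_pos_of_pos_of_lt_pi h3 (by linarith [Real.pi_pos])
      have hs' : Real.sin (c * y) ≤ c * y := Real.sin_le h3.le
      have hco : Real.cos (c * y₀) ≤ Real.cos (c * y) :=
        Real.cos_le_cos_of_nonneg_of_le_pi h3.le (by linarith [Real.pi_pos]) h4.le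
      have hq := Real.sqrt_pos.2 (hD y)
      have hqM := Real.sqrt_le_sqrt (hDM y)
      rw [Real.norm_of_nonneg (by positivity), div_mul_div_comm, inv_eq_one_div,
        div_le_div_iff₀ h1 (by positivity), one_mul]
      calc _ ≤ Real.cos (c * y) * ((c * y) * Real.sqrt (c ^ 2 * (n : ℝ) ^ 2 + |c₁|)) := by
            gcongr
            exact hm.le.trans hco
        _ = _ := by ring
    have h := intervalIntegrable_inv_iff (a := 0) (b := y₀)
    rw [intervalIntegrable_iff_integrableOn_Ioo_of_le hy0.le] at h
    rcases h.1 key with h | h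
    · exact hy0.ne h
    · exact h Set.left_mem_uIcc
end

section
/- Fix an integer n ≥ 1, a real c > 0, and a constant c₁ > 0. Let y₀ ∈ (−∞, 0) and define g(y) = 1 / ( tanh(c·y) · sqrt( c²·n² + c₁·sinh(c·y)^{2n} ) ) for y < 0. Then g is Lebesgue integrable on the interval (−∞, y₀), and g is not Lebesgue integrable on the interval (y₀, 0). -/
open Real Set Filter Topology MeasureTheory

lemma aux_tanh_mono {a b : ℝ} (h : a ≤ b) : Real.tanh a ≤ Real.tanh b := by
  rw [Real.tanh_eq_sinh_div_cosh, Real.tanh_eq_sinh_div_cosh,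
    div_le_div_iff₀ (Real.cosh_pos a) (Real.cosh_pos b)]
  have h1 : 0 ≤ Real.sinh (b - a) := Real.sinh_nonneg_iff.2 (by linarith)
  rw [Real.sinh_sub] at h1
  linarith

lemma aux_tanh_pos {a : ℝ} (h : 0 < a) : 0 < Real.tanh a := by
  rw [Real.tanh_eq_sinh_div_cosh]
  exact div_pos (Real.sinh_pos_iff.2 h) (Real.cosh_pos a)

lemma aux_exp_le (t : ℝ) : Real.exp t / 2 ≤ Real.cosh t := by
  rw [Real.cosh_eq]
  have := Real.exp_pos (-t)
  linarith

lemma aux_tanh_le {t : ℝ} (h : 0 ≤ t) : Real.tanh t ≤ 2 * t := by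
  rw [Real.tanh_eq_sinh_div_cosh, div_le_iff₀ (Real.cosh_pos t)]
  have h1 : Real.exp (-t) = Real.exp t * Real.exp (-(2 * t)) := by
    rw [← Real.exp_add]; congr 1; ring
  have h2 := Real.add_one_le_exp (-(2 * t))
  have h3 : Real.sinh t ≤ t * Real.exp t := by
    rw [Real.sinh_eq, h1]
    nlinarith [Real.exp_pos t]
  have h4 := mul_le_mul_of_nonneg_left (aux_exp_le t) h
  linarith

lemma aux_norm (n : ℕ) (c c₁ y : ℝ) (hy : c * y < 0) :
    ‖1 / (Real.tanh (c * y) *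
        Real.sqrt (c ^ 2 * (n : ℝ) ^ 2 + c₁ * Real.sinh (c * y) ^ (2 * n)))‖ =
    1 / (Real.tanh (-(c * y)) *
        Real.sqrt (c ^ 2 * (n : ℝ) ^ 2 + c₁ * Real.sinh (-(c * y)) ^ (2 * n))) := by
  have h1 : Real.sinh (-(c * y)) ^ (2 * n) = Real.sinh (c * y) ^ (2 * n) := by
    rw [Real.sinh_neg, Even.neg_pow (even_two_mul n)]
  have h2 : 0 < Real.tanh (-(c * y)) := aux_tanh_pos (by linarith)
  rw [h1, norm_div, norm_mul, norm_one, Real.norm_eq_abs, Real.norm_eq_abs,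
    abs_of_nonneg (Real.sqrt_nonneg _), ← abs_neg, ← Real.tanh_neg, abs_of_pos h2]

lemma aux_meas (n : ℕ) (c c₁ : ℝ) : Measurable (fun y : ℝ => 1 / (Real.tanh (c * y) *
        Real.sqrt (c ^ 2 * (n : ℝ) ^ 2 + c₁ * Real.sinh (c * y) ^ (2 * n)))) := by
  simp only [Real.tanh_eq_sinh_div_cosh]
  have h1 : Measurable Real.sinh := Real.continuous_sinh.measurable
  have h2 : Measurable Real.cosh := Real.continuous_cosh.measurable
  fun_prop

/-- For `c₁ > 0` and `y₀ < 0`, the function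
`g(y) = 1/(tanh(c·y)·√(c²n² + c₁·sinh(c·y)^{2n}))` is Lebesgue integrable on `(-∞, y₀)`
but not on `(y₀, 0)`. -/
theorem betaIII_integrability (n : ℕ) (hn : 1 ≤ n) (c : ℝ) (hc : 0 < c)
    (c₁ : ℝ) (hc₁ : 0 < c₁)
    (y₀ : ℝ) (hy₀ : y₀ < 0) :
    MeasureTheory.IntegrableOn
      (fun y => 1 / (Real.tanh (c * y) *
        Real.sqrt (c ^ 2 * (n : ℝ) ^ 2 + c₁ * Real.sinh (c * y) ^ (2 * n))))
      (Set.Iio y₀) ∧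
    ¬ MeasureTheory.IntegrableOn
      (fun y => 1 / (Real.tanh (c * y) *
        Real.sqrt (c ^ 2 * (n : ℝ) ^ 2 + c₁ * Real.sinh (c * y) ^ (2 * n))))
      (Set.Ioo y₀ 0) := by
  constructor
  · have ht0 : 0 < -(c * y₀) := by nlinarith
    set t₀ := -(c * y₀) with ht₀
    have hT := aux_tanh_pos ht0
    have hS : 0 < Real.sinh t₀ := Real.sinh_pos_iff.2 ht0
    have hq : 0 < √c₁ := Real.sqrt_pos.2 hc₁
    have hI := ((integrableOn_exp_mul_Iic hc y₀).mono_set Iio_subset_Iic_self).const_mul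
      (1 / (Real.tanh t₀ * (√c₁ * (Real.sinh t₀ ^ (n - 1) * (Real.tanh t₀ / 2)))))
    refine Integrable.mono' hI (aux_meas n c c₁).aestronglyMeasurable ?_
    filter_upwards [ae_restrict_mem measurableSet_Iio] with y hy
    have hy' : y < y₀ := hy
    have hcy : c * y < c * y₀ := mul_lt_mul_of_pos_left hy' hc
    rw [aux_norm n c c₁ y (by linarith)]
    have he : Real.exp (c * y) = 1 / Real.exp (-(c * y)) := by
      rw [Real.exp_neg]; simp
    rw [he]
    have htt : t₀ ≤ -(c * y) := by linarith
    generalize -(c * y) = t at htt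
    rw [div_mul_div_comm, one_mul]
    have hTm := aux_tanh_mono htt
    have hSm : Real.sinh t₀ ≤ Real.sinh t := Real.sinh_le_sinh.2 htt
    have hs : Real.tanh t₀ / 2 * Real.exp t ≤ Real.sinh t := by
      have h1 : Real.sinh t = Real.tanh t * Real.cosh t := by
        rw [Real.tanh_eq_sinh_div_cosh, div_mul_cancel₀ _ (Real.cosh_pos t).ne']
      rw [h1]
      have h2 := mul_le_mul hTm (aux_exp_le t) (by positivity) (hT.le.trans hTm)
      linarith
    have hpow : Real.sinh t₀ ^ (n - 1) * (Real.tanh t₀ / 2 * Real.exp t) ≤ Real.sinh t ^ n := by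
      obtain ⟨m, rfl⟩ : ∃ m, n = m + 1 := ⟨n - 1, by omega⟩
      rw [Nat.add_sub_cancel, pow_succ]
      exact mul_le_mul (pow_le_pow_left₀ hS.le hSm m) hs (by positivity)
        (pow_nonneg (hS.le.trans hSm) m)
    have hsq : √c₁ * Real.sinh t ^ n ≤
        √(c ^ 2 * (n : ℝ) ^ 2 + c₁ * Real.sinh t ^ (2 * n)) := by
      apply Real.le_sqrt_of_sq_le
      rw [mul_pow, Real.sq_sqrt hc₁.le, ← pow_mul, mul_comm n 2]
      have : 0 ≤ c ^ 2 * (n : ℝ) ^ 2 := by positivity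
      linarith
    apply one_div_le_one_div_of_le
    · positivity
    · calc _ = Real.tanh t₀ * (√c₁ * (Real.sinh t₀ ^ (n - 1) *
            (Real.tanh t₀ / 2 * Real.exp t))) := by ring
        _ ≤ Real.tanh t * (√c₁ * Real.sinh t ^ n) := by
          apply mul_le_mul hTm _ (by positivity) (hT.le.trans hTm)
          exact mul_le_mul_of_nonneg_left hpow hq.le
        _ ≤ _ := mul_le_mul_of_nonneg_left hsq (hT.le.trans hTm)
  · intro hg
    have hn0 : (0 : ℝ) < n := by exact_mod_cast hn
    set M := √(c ^ 2 * (n : ℝ) ^ 2 + c₁ * Real.sinh (-(c * y₀)) ^ (2 * n)) with hM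
    have key : IntegrableOn (fun y : ℝ => y⁻¹) (Set.Ioo y₀ 0) := by
      refine Integrable.mono' (hg.norm.const_mul (2 * c * M))
        measurable_inv.aestronglyMeasurable ?_
      filter_upwards [ae_restrict_mem measurableSet_Ioo] with y hy
      have hcy : c * y₀ < c * y := mul_lt_mul_of_pos_left hy.1 hc
      have hcy0 : c * y < 0 := mul_neg_of_pos_of_neg hc hy.2
      rw [aux_norm n c c₁ y hcy0]
      have hTp : 0 < Real.tanh (-(c * y)) := aux_tanh_pos (by linarith)
      have hTl : Real.tanh (-(c * y)) ≤ 2 * (-(c * y)) := aux_tanh_le (by linarith)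
      have hSp : 0 < Real.sinh (-(c * y)) := Real.sinh_pos_iff.2 (by linarith)
      have hSl : Real.sinh (-(c * y)) ≤ Real.sinh (-(c * y₀)) :=
        Real.sinh_le_sinh.2 (by linarith)
      have hRp : 0 < √(c ^ 2 * (n : ℝ) ^ 2 + c₁ * Real.sinh (-(c * y)) ^ (2 * n)) :=
        Real.sqrt_pos.2 (by positivity)
      have hRl : √(c ^ 2 * (n : ℝ) ^ 2 + c₁ * Real.sinh (-(c * y)) ^ (2 * n)) ≤ M := by
        apply Real.sqrt_le_sqrt
        gcongr
      have hy0 : 0 < -y := by linarith [hy.2]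
      rw [norm_inv, Real.norm_eq_abs, abs_of_neg hy.2, mul_one_div, inv_eq_one_div,
        div_le_div_iff₀ hy0 (mul_pos hTp hRp), one_mul]
      have := mul_le_mul hTl hRl hRp.le (by linarith)
      linarith
    have h2 : IntervalIntegrable (fun y : ℝ => y⁻¹) volume y₀ 0 := by
      rw [intervalIntegrable_iff_integrableOn_Ioo_of_le hy₀.le]
      exact key
    rw [intervalIntegrable_inv_iff] at h2
    rcases h2 with h2 | h2
    · exact hy₀.ne h2
    · exact h2 Set.right_mem_uIcc
end

section
/- Fix an integer n ≥ 1 and a real c > 0. Let L ⊆ ℝ be an open interval and f : L → (0, π/(2c)) a C² solution of the type II Grim Reaper ODE which is time-like at some s₀ ∈ L, i.e. f'(s₀)² > b_II(f(s₀))², and which is maximal in the sense that there is no solution of the type II Grim Reaper ODE defined on a strictly larger open interval whose restriction to L is f. Then there exists k ∈ ℝ such that: if f'(s₀) > 0, then L = (−∞, k), f(s) → π/(2c) as s → k from the left, and f(s) → 0 as s → −∞; and if f'(s₀) < 0, then L = (k, +∞), f(s) → π/(2c) as s → k from the right, and f(s) → 0 as s → +∞. -/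
open Real Set Filter Topology

lemma gr_bII_pos (n : ℕ) (hn : 1 ≤ n) (c : ℝ) (hc : 0 < c) (y : ℝ)
    (hy : y ∈ Set.Ioo 0 (π / (2 * c))) :
    0 < c * y ∧ c * y < π / 2 ∧ 0 < Real.sin (c * y) ∧ 0 < Real.cos (c * y) ∧ 0 < bII n c y ∧
      HasDerivAt (bII n c) (deriv (bII n c) y) y := by
  have h1 : 0 < c * y := mul_pos hc hy.1
  have h2 : c * y < π / 2 := by
    have := (lt_div_iff₀ (by positivity)).1 hy.2
    linarith
  have hs : 0 < Real.sin (c * y) := Real.sin_pos_of_pos_of_lt_pi h1 (by linarith [Real.pi_pos])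
  have hcs : 0 < Real.cos (c * y) := Real.cos_pos_of_mem_Ioo ⟨by linarith, h2⟩
  have hn' : (0 : ℝ) < n := by exact_mod_cast hn
  refine ⟨h1, h2, hs, hcs, ?_, ?_⟩
  · unfold bII
    exact mul_pos (mul_pos hn' hc) (Real.tan_pos_of_pos_of_lt_pi_div_two h1 h2)
  · apply DifferentiableAt.hasDerivAt
    unfold bII
    have : DifferentiableAt ℝ (fun y => Real.tan (c * y)) y :=
      DifferentiableAt.comp y (g := Real.tan) (f := fun y => c * y)
        (Real.differentiableAt_tan.2 hcs.ne') (by fun_prop)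
    exact this.const_mul _

lemma gr_const (L : Set ℝ) (hLopen : IsOpen L) (hLconn : L.OrdConnected) (F : ℝ → ℝ)
    (hF : ∀ s ∈ L, HasDerivAt F 0 s) (s t : ℝ) (hs : s ∈ L) (ht : t ∈ L) : F s = F t := by
  refine hLopen.is_const_of_deriv_eq_zero hLconn.isPreconnected
    (fun x hx => (hF x hx).differentiableAt.differentiableWithinAt)
    (fun x hx => (hF x hx).deriv) hs ht

/-- First integrals of a solution. -/
lemma gr_forward (n : ℕ) (hn : 1 ≤ n) (c : ℝ) (hc : 0 < c)
    (L : Set ℝ) (hLopen : IsOpen L) (hLconn : L.OrdConnected)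
    (f : ℝ → ℝ) (hf : IsGrimReaperSolII n c f L)
    (s₀ : ℝ) (hs₀ : s₀ ∈ L)
    (htime : (bII n c (f s₀)) ^ 2 < (deriv f s₀) ^ 2) (hpos : 0 < deriv f s₀) :
    ∃ P Q : ℝ, P < 0 ∧ 0 < Q ∧ ∀ s ∈ L, (Real.sin (c * f s) ^ n)⁻¹ =
      P * Real.exp ((c ^ 2 * (n : ℝ) ^ 2) * s) + Q * Real.exp (-((c ^ 2 * (n : ℝ) ^ 2) * s)) := by
  obtain ⟨hval, hC, hode⟩ := hf
  set a : ℝ := c ^ 2 * (n : ℝ) ^ 2 with ha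
  have hn' : (0 : ℝ) < n := by exact_mod_cast hn
  have hf1 : ∀ s ∈ L, HasDerivAt f (deriv f s) s := fun s hs =>
    ((hC.contDiffAt (hLopen.mem_nhds hs)).differentiableAt (by norm_num)).hasDerivAt
  have hf2 : ∀ s ∈ L, HasDerivAt (deriv f) (deriv (deriv f) s) s := fun s hs => by
    have h2 : ContDiffOn ℝ 1 (deriv f) L := hC.deriv_of_isOpen hLopen (by norm_num)
    exact ((h2.contDiffAt (hLopen.mem_nhds hs)).differentiableAt (by norm_num)).hasDerivAt
  let u : ℝ → ℝ := fun s => deriv f s / bII n c (f s)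
  let w : ℝ → ℝ := fun s => (Real.sin (c * f s) ^ n)⁻¹
  have hu : ∀ s ∈ L, HasDerivAt u (a * (u s ^ 2 - 1)) s := by
    intro s hs
    obtain ⟨-, -, -, -, hb, hbd⟩ := gr_bII_pos n hn c hc (f s) (hval s hs)
    have h := (hf2 s hs).div (hbd.comp s (hf1 s hs)) hb.ne'
    refine HasDerivAt.congr_deriv h ?_
    rw [hode s hs]
    simp only [u, Function.comp]
    have := hb.ne'
    field_simp
    ring
  have hw : ∀ s ∈ L, HasDerivAt w (-a * (w s * u s)) s := by
    intro s hs
    obtain ⟨-, -, hsin, hcos, hb, hbd⟩ := gr_bII_pos n hn c hc (f s) (hval s hs)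
    have h := ((((hf1 s hs).const_mul c).sin).pow n).inv (pow_pos hsin n).ne'
    refine HasDerivAt.congr_deriv h ?_
    simp only [u, w, bII, Real.tan_eq_sin_div_cos, Pi.pow_apply]
    obtain ⟨m, rfl⟩ : ∃ m, n = m + 1 := ⟨n - 1, by omega⟩
    simp only [Nat.add_sub_cancel, ha]
    have h1 := hsin.ne'
    have h2 := hcos.ne'
    have h3 := hn'.ne'
    field_simp
    ring
  have hv : ∀ s ∈ L, HasDerivAt (fun s => w s * u s) (-a * w s) s := by
    intro s hs
    refine HasDerivAt.congr_deriv ((hw s hs).mul (hu s hs)) ?_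
    ring
  have he : ∀ s, HasDerivAt (fun s => Real.exp (a * s)) (Real.exp (a * s) * a) s := fun s => by
    simpa using ((hasDerivAt_id s).const_mul a).exp
  have he' : ∀ s, HasDerivAt (fun s => Real.exp (-(a * s))) (Real.exp (-(a * s)) * (-a)) s :=
    fun s => by simpa using ((hasDerivAt_id s).const_mul a).neg.exp
  have hQ := gr_const L hLopen hLconn (fun s => (w s + w s * u s) * Real.exp (a * s)) (by
    intro s hs
    refine HasDerivAt.congr_deriv (((hw s hs).add (hv s hs)).mul (he s)) ?_
    simp only [Pi.add_apply]
    ring)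
  have hP := gr_const L hLopen hLconn (fun s => (w s - w s * u s) * Real.exp (-(a * s))) (by
    intro s hs
    refine HasDerivAt.congr_deriv (((hw s hs).sub (hv s hs)).mul (he' s)) ?_
    simp only [Pi.sub_apply]
    ring)
  obtain ⟨-, -, hsin, hcos, hb, hbd⟩ := gr_bII_pos n hn c hc (f s₀) (hval s₀ hs₀)
  have hw0 : 0 < w s₀ := inv_pos.2 (pow_pos hsin n)
  have hu0 : 1 < u s₀ := by
    simp only [u]
    rw [one_lt_div hb]
    exact lt_of_pow_lt_pow_left₀ 2 hpos.le htime
  refine ⟨(w s₀ - w s₀ * u s₀) * Real.exp (-(a * s₀)) / 2,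
    (w s₀ + w s₀ * u s₀) * Real.exp (a * s₀) / 2, ?_, by positivity, ?_⟩
  · have : (w s₀ - w s₀ * u s₀) < 0 := by nlinarith
    have := mul_neg_of_neg_of_pos this (Real.exp_pos (-(a * s₀)))
    linarith
  · intro s hs
    have e1 := hQ s s₀ hs hs₀
    have e2 := hP s s₀ hs hs₀
    rw [← e1, ← e2]
    have e3 : Real.exp (-(a * s)) * Real.exp (a * s) = 1 := by
      rw [← Real.exp_add]; simp
    change w s = _
    linear_combination (-w s) * e3

/-- The explicit solution. -/
lemma gr_explicit (n : ℕ) (hn : 1 ≤ n) (c : ℝ) (hc : 0 < c) (W V : ℝ → ℝ) (L : Set ℝ)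
    (hLopen : IsOpen L) (hWc : ContDiff ℝ 2 W)
    (hW : ∀ s, HasDerivAt W (-(c ^ 2 * (n : ℝ) ^ 2) * V s) s)
    (hV : ∀ s, HasDerivAt V (-(c ^ 2 * (n : ℝ) ^ 2) * W s) s)
    (hL : ∀ s ∈ L, 1 < W s) :
    IsGrimReaperSolII n c (fun s => Real.arcsin (W s ^ (-(1 / (n : ℝ)))) / c) L := by
  have hn' : (0 : ℝ) < n := by exact_mod_cast hn
  set g : ℝ → ℝ := fun s => Real.arcsin (W s ^ (-(1 / (n : ℝ)))) / c with hg
  have hx : ∀ s ∈ L, 0 < W s ^ (-(1 / (n : ℝ))) ∧ W s ^ (-(1 / (n : ℝ))) < 1 := by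
    intro s hs
    have := hL s hs
    refine ⟨Real.rpow_pos_of_pos (by linarith) _, ?_⟩
    apply Real.rpow_lt_one_of_one_lt_of_neg this
    have : 0 < 1 / (n : ℝ) := by positivity
    linarith
  have hval : ∀ s ∈ L, g s ∈ Set.Ioo 0 (π / (2 * c)) := by
    intro s hs
    obtain ⟨h0, h1⟩ := hx s hs
    refine ⟨div_pos (Real.arcsin_pos.2 h0) hc, ?_⟩
    have : Real.arcsin (W s ^ (-(1 / (n : ℝ)))) < π / 2 := Real.arcsin_lt_pi_div_two.2 h1
    rw [← div_div]
    exact div_lt_div_of_pos_right this hc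
  have hg1 : ∀ s ∈ L, HasDerivAt g (V s / W s * bII n c (g s)) s := by
    intro s hs
    obtain ⟨h0, h1⟩ := hx s hs
    have hWs := hL s hs
    have hWp : 0 < W s := by linarith
    have h := ((Real.hasDerivAt_arcsin (by linarith) h1.ne).comp s
      ((hW s).rpow_const (p := -(1 / (n : ℝ))) (Or.inl hWp.ne'))).div_const c
    refine HasDerivAt.congr_deriv h ?_
    have hcg : c * g s = Real.arcsin (W s ^ (-(1 / (n : ℝ)))) := by
      simp only [hg]; field_simp
    unfold bII
    rw [hcg, Real.tan_arcsin, Real.rpow_sub_one hWp.ne']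
    have hsq : 0 < √(1 - (W s ^ (-(1 / (n : ℝ)))) ^ 2) := by
      apply Real.sqrt_pos.2; nlinarith
    generalize √(1 - (W s ^ (-(1 / (n : ℝ)))) ^ 2) = r at *
    generalize W s ^ (-(1 / (n : ℝ))) = x at *
    have := hsq.ne'
    have := hWp.ne'
    field_simp
  refine ⟨hval, ?_, ?_⟩
  · intro s hs
    obtain ⟨h0, h1⟩ := hx s hs
    have hWp : 0 < W s := by linarith [hL s hs]
    apply ContDiffAt.contDiffWithinAt
    refine ContDiffAt.div_const ?_ c
    exact ContDiffAt.comp (g := Real.arcsin) s (Real.contDiffAt_arcsin (by linarith) h1.ne)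
      (hWc.contDiffAt.rpow_const_of_ne hWp.ne')
  · intro s hs
    have hWp : 0 < W s := by linarith [hL s hs]
    obtain ⟨-, -, -, -, hb, hbd⟩ := gr_bII_pos n hn c hc (g s) (hval s hs)
    have heq : deriv g =ᶠ[𝓝 s] fun s => V s / W s * bII n c (g s) := by
      filter_upwards [hLopen.mem_nhds hs] with t ht using (hg1 t ht).deriv
    have h2 := ((hV s).div (hW s) hWp.ne').mul (hbd.comp s (hg1 s hs))
    rw [heq.deriv_eq, (hg1 s hs).deriv]
    refine h2.deriv.trans ?_
    simp only [Function.comp, Pi.div_apply]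
    have := hb.ne'
    have := hWp.ne'
    field_simp
    ring

lemma gr_pos (n : ℕ) (hn : 1 ≤ n) (c : ℝ) (hc : 0 < c)
    (L : Set ℝ) (hLopen : IsOpen L) (hLconn : L.OrdConnected)
    (f : ℝ → ℝ) (hf : IsGrimReaperSolII n c f L)
    (s₀ : ℝ) (hs₀ : s₀ ∈ L)
    (htime : (bII n c (f s₀)) ^ 2 < (deriv f s₀) ^ 2)
    (hmax : ∀ (L' : Set ℝ) (g : ℝ → ℝ), IsOpen L' → L'.OrdConnected → L ⊆ L' →
      IsGrimReaperSolII n c g L' → Set.EqOn g f L → L' = L) (hpos : 0 < deriv f s₀) :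
    ∃ k : ℝ,
        L = Set.Iio k ∧
        Filter.Tendsto f (𝓝[<] k) (𝓝 (π / (2 * c))) ∧
        Filter.Tendsto f Filter.atBot (𝓝 0) := by
  obtain ⟨P, Q, hP, hQ, hPQ⟩ := gr_forward n hn c hc L hLopen hLconn f hf s₀ hs₀ htime hpos
  have hn' : (0 : ℝ) < n := by exact_mod_cast hn
  have hap : 0 < c ^ 2 * (n : ℝ) ^ 2 := by positivity
  set a : ℝ := c ^ 2 * (n : ℝ) ^ 2 with ha
  set W : ℝ → ℝ := fun s => P * Real.exp (a * s) + Q * Real.exp (-(a * s)) with hWdef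
  set V : ℝ → ℝ := fun s => Q * Real.exp (-(a * s)) - P * Real.exp (a * s) with hVdef
  have he : ∀ s, HasDerivAt (fun s => Real.exp (a * s)) (Real.exp (a * s) * a) s := fun s => by
    simpa using ((hasDerivAt_id s).const_mul a).exp
  have he' : ∀ s, HasDerivAt (fun s => Real.exp (-(a * s))) (Real.exp (-(a * s)) * (-a)) s :=
    fun s => by simpa using ((hasDerivAt_id s).const_mul a).neg.exp
  have hW : ∀ s, HasDerivAt W (-a * V s) s := fun s => by
    refine HasDerivAt.congr_deriv (((he s).const_mul P).add ((he' s).const_mul Q)) ?_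
    simp only [hVdef]; ring
  have hV : ∀ s, HasDerivAt V (-a * W s) s := fun s => by
    refine HasDerivAt.congr_deriv (((he' s).const_mul Q).sub ((he s).const_mul P)) ?_
    simp only [hWdef]; ring
  have hWc : ContDiff ℝ 2 W := by simp only [hWdef]; fun_prop
  have hWanti : StrictAnti W := by
    intro x y hxy
    have h1 : Real.exp (a * x) < Real.exp (a * y) := Real.exp_lt_exp.2 (by nlinarith)
    have h2 : Real.exp (-(a * y)) < Real.exp (-(a * x)) := Real.exp_lt_exp.2 (by nlinarith)
    simp only [hWdef]
    nlinarith
  have hWL : ∀ s ∈ L, 1 < W s := by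
    intro s hs
    rw [← show _ = W s from hPQ s hs]
    obtain ⟨h1, h2, hsin, hcos, -, -⟩ := gr_bII_pos n hn c hc (f s) (hf.1 s hs)
    have : Real.sin (c * f s) < 1 := by
      nlinarith [Real.sin_sq_add_cos_sq (c * f s)]
    exact (one_lt_inv₀ (pow_pos hsin n)).2 (pow_lt_one₀ hsin.le this (by omega))
  have hat : Tendsto (fun s : ℝ => a * s) atTop atTop := tendsto_id.const_mul_atTop hap
  have hab : Tendsto (fun s : ℝ => a * s) atBot atBot := tendsto_id.const_mul_atBot hap
  have hWbot : Tendsto W atBot atTop := by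
    have h1 : Tendsto (fun s => P * Real.exp (a * s)) atBot (𝓝 (P * 0)) :=
      (Real.tendsto_exp_atBot.comp hab).const_mul P
    have h2 : Tendsto (fun s => Q * Real.exp (-(a * s))) atBot atTop :=
      (Real.tendsto_exp_atTop.comp (tendsto_neg_atBot_atTop.comp hab)).const_mul_atTop hQ
    exact h1.add_atTop h2
  have hWtop : Tendsto W atTop atBot := by
    have h1 : Tendsto (fun s => P * Real.exp (a * s)) atTop atBot :=
      (Real.tendsto_exp_atTop.comp hat).const_mul_atTop_of_neg hP
    have h2 : Tendsto (fun s => Q * Real.exp (-(a * s))) atTop (𝓝 (Q * 0)) :=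
      (Real.tendsto_exp_atBot.comp (tendsto_neg_atTop_atBot.comp hat)).const_mul Q
    exact h1.atBot_add h2
  obtain ⟨t, ht⟩ := (hWtop.eventually_le_atBot 1).exists
  obtain ⟨k, hk⟩ := mem_range_of_exists_le_of_exists_ge hWc.continuous ⟨t, ht⟩
    ⟨s₀, (hWL s₀ hs₀).le⟩
  have hLk : L ⊆ Set.Iio k := fun s hs => by
    have := hWL s hs
    rw [← hk] at this
    exact hWanti.lt_iff_gt.1 this
  have hsol := gr_explicit n hn c hc W V (Set.Iio k) isOpen_Iio hWc hW hV (fun s hs => by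
    rw [← hk]; exact hWanti hs)
  set g : ℝ → ℝ := fun s => Real.arcsin (W s ^ (-(1 / (n : ℝ)))) / c with hg
  have hgf : Set.EqOn g f L := by
    intro s hs
    obtain ⟨h1, h2, hsin, hcos, -, -⟩ := gr_bII_pos n hn c hc (f s) (hf.1 s hs)
    have : W s ^ (-(1 / (n : ℝ))) = Real.sin (c * f s) := by
      rw [← show _ = W s from hPQ s hs, Real.rpow_neg (by positivity),
        Real.inv_rpow (by positivity), inv_inv, one_div, Real.pow_rpow_inv_natCast hsin.le (by omega)]
    simp only [hg]
    rw [this, Real.arcsin_sin (by linarith) h2.le]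
    field_simp
  have hLeq := hmax (Set.Iio k) g isOpen_Iio Set.ordConnected_Iio hLk hsol hgf
  refine ⟨k, hLeq.symm, ?_, ?_⟩
  · have hgc : ContinuousAt g k := by
      have h1 : ContinuousAt (fun s => W s ^ (-(1 / (n : ℝ)))) k :=
        hWc.continuous.continuousAt.rpow_const (Or.inl (by rw [hk]; norm_num))
      exact (Real.continuous_arcsin.continuousAt.comp h1).div_const c
    have hgk : g k = π / (2 * c) := by
      simp only [hg]
      rw [hk, Real.one_rpow, Real.arcsin_one, div_div]
    have h := hgc.tendsto.mono_left (nhdsWithin_le_nhds (s := Set.Iio k))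
    rw [hgk] at h
    refine h.congr' ?_
    filter_upwards [self_mem_nhdsWithin] with s hs
    exact hgf (hLeq ▸ hs)
  · have h1 : Tendsto (fun s => W s ^ (-(1 / (n : ℝ)))) atBot (𝓝 0) :=
      (tendsto_rpow_neg_atTop (y := 1 / (n : ℝ)) (by positivity)).comp hWbot
    have h2 : Tendsto g atBot (𝓝 (Real.arcsin 0 / c)) :=
      ((Real.continuous_arcsin.tendsto 0).comp h1).div_const c
    rw [Real.arcsin_zero, zero_div] at h2
    refine h2.congr' ?_
    filter_upwards [Iio_mem_atBot k] with s hs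
    exact hgf (hLeq ▸ hs)

lemma gr_reflect (n : ℕ) (c : ℝ) (f : ℝ → ℝ) (L : Set ℝ) (hf : IsGrimReaperSolII n c f L) :
    IsGrimReaperSolII n c (fun s => f (-s)) (Neg.neg ⁻¹' L) := by
  obtain ⟨h1, h2, h3⟩ := hf
  refine ⟨fun s hs => h1 _ hs, h2.comp contDiff_neg.contDiffOn (fun s hs => hs), ?_⟩
  intro s hs
  have e1 : deriv (fun s => f (-s)) = fun s => -deriv f (-s) := by
    funext s; exact deriv_comp_neg f s
  have e2 : deriv (fun s => -deriv f (-s)) s = deriv (deriv f) (-s) := by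
    rw [deriv.fun_neg, deriv_comp_neg (deriv f) s, neg_neg]
  rw [e1, e2, h3 _ hs]
  simp only [neg_sq]

lemma gr_ordConnected_neg (L : Set ℝ) (h : L.OrdConnected) :
    (Neg.neg ⁻¹' L : Set ℝ).OrdConnected :=
  ⟨fun x hx y hy z hz => h.out hy hx ⟨neg_le_neg hz.2, neg_le_neg hz.1⟩⟩

/-- A maximal time-like solution of the type II Grim Reaper ODE is of
Type II.A: defined on `(-∞, k)` (if increasing at `s₀`) or `(k, +∞)` (if decreasing at
`s₀`), blowing up to `π/(2c)` at the finite end `k` and tending to `0` at the infinite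
end. -/
theorem grimReaperII_timelike_classification (n : ℕ) (hn : 1 ≤ n) (c : ℝ) (hc : 0 < c)
    (L : Set ℝ) (hLopen : IsOpen L) (hLconn : L.OrdConnected)
    (f : ℝ → ℝ) (hf : IsGrimReaperSolII n c f L)
    (s₀ : ℝ) (hs₀ : s₀ ∈ L)
    (htime : (bII n c (f s₀)) ^ 2 < (deriv f s₀) ^ 2)
    (hmax : ∀ (L' : Set ℝ) (g : ℝ → ℝ), IsOpen L' → L'.OrdConnected → L ⊆ L' →
      IsGrimReaperSolII n c g L' → Set.EqOn g f L → L' = L) :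
    ∃ k : ℝ,
      (0 < deriv f s₀ →
        L = Set.Iio k ∧
        Filter.Tendsto f (𝓝[<] k) (𝓝 (π / (2 * c))) ∧
        Filter.Tendsto f Filter.atBot (𝓝 0)) ∧
      (deriv f s₀ < 0 →
        L = Set.Ioi k ∧
        Filter.Tendsto f (𝓝[>] k) (𝓝 (π / (2 * c))) ∧
        Filter.Tendsto f Filter.atTop (𝓝 0)) := by
  rcases lt_trichotomy (deriv f s₀) 0 with hneg | hzero | hpos
  · obtain ⟨k, hk1, hk2, hk3⟩ := gr_pos n hn c hc (Neg.neg ⁻¹' L)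
      (hLopen.preimage continuous_neg) (gr_ordConnected_neg L hLconn) (fun s => f (-s))
      (gr_reflect n c f L hf) (-s₀) (by simpa using hs₀)
      (by rw [deriv_comp_neg]; simpa using htime)
      (by
        intro L' g hL' hc' hsub hg heq
        have h := hmax (Neg.neg ⁻¹' L') (fun s => g (-s)) (hL'.preimage continuous_neg)
          (gr_ordConnected_neg L' hc') (fun s hs => hsub (by simpa using hs))
          (gr_reflect n c g L' hg) (fun s hs => by
            have := heq (x := -s) (by simpa using hs)
            simpa using this)
        rw [← h]
        ext s
        simp)
      (by rw [deriv_comp_neg]; simpa using hneg)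
    refine ⟨-k, fun h => absurd h hneg.not_gt, fun _ => ⟨?_, ?_, ?_⟩⟩
    · ext s
      have := Set.ext_iff.1 hk1 (-s)
      simp only [Set.mem_preimage, neg_neg, Set.mem_Iio] at this
      rw [this, Set.mem_Ioi]
      exact neg_lt
    · have := hk2.comp (tendsto_neg_nhdsGT_neg (a := k))
      simpa [Function.comp_def] using this
    · have := hk3.comp tendsto_neg_atTop_atBot
      simpa [Function.comp_def] using this
  · exact ⟨0, fun h => absurd hzero h.ne', fun h => absurd hzero h.ne⟩
  · obtain ⟨k, hk⟩ := gr_pos n hn c hc L hLopen hLconn f hf s₀ hs₀ htime hmax hpos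
    exact ⟨k, fun _ => hk, fun h => absurd h hpos.not_gt⟩
end

section
/- Fix an integer n ≥ 1 and a real c > 0. Let L ⊆ ℝ be an open interval and f : L → (−∞, 0) a C² solution of the type III Grim Reaper ODE which is time-like at some s₀ ∈ L, i.e. f'(s₀)² > b_III(f(s₀))², and which is maximal in the sense that there is no solution of the type III Grim Reaper ODE defined on a strictly larger open interval whose restriction to L is f. Then there exists k ∈ ℝ such that: if f'(s₀) > 0, then L = (k, +∞), f(s) → −∞ as s → k from the right, and f(s) → 0 as s → +∞; and if f'(s₀) < 0, then L = (−∞, k), f(s) → −∞ as s → k from the left, and f(s) → 0 as s → −∞. -/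
open Real Set Filter Topology

lemma bIII_hasDerivAt_s18 (n : ℕ) (c y : ℝ) :
    HasDerivAt (bIII n c) (deriv (bIII n c) y) y := by
  have : DifferentiableAt ℝ (bIII n c) y := by
    unfold bIII
    simp only [Real.tanh_eq_sinh_div_cosh]
    have : Real.cosh (c * y) ≠ 0 := (Real.cosh_pos _).ne'
    fun_prop (disch := assumption)
  exact this.hasDerivAt

/-- the explicit linear-ODE solution -/
noncomputable def wF (d α β : ℝ) (s : ℝ) : ℝ := α * Real.exp (d * s) - β * Real.exp (-(d * s))

lemma wF_deriv (d α β s : ℝ) :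
    HasDerivAt (wF d α β) (d * (α * Real.exp (d * s) + β * Real.exp (-(d * s)))) s := by
  have h0 : HasDerivAt (fun s : ℝ => d * s) d s := by
    simpa using (hasDerivAt_id s).const_mul d
  have h := (h0.exp.const_mul α).sub (h0.neg.exp.const_mul β)
  exact h.congr_deriv (by simp only [Pi.neg_apply]; ring)

noncomputable def gF (n : ℕ) (c d α β : ℝ) (s : ℝ) : ℝ :=
  -(Real.arsinh ((wF d α β s) ^ (-(n : ℝ)⁻¹)) / c)

lemma gF_sol (n : ℕ) (hn : 1 ≤ n) (c : ℝ) (hc : 0 < c) (α β : ℝ) (U : Set ℝ) (hU : IsOpen U)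
    (hw : ∀ s ∈ U, 0 < wF (c ^ 2 * (n : ℝ) ^ 2) α β s) :
    IsGrimReaperSolIII n c (gF n c (c ^ 2 * (n : ℝ) ^ 2) α β) U := by
  have hN : (0 : ℝ) < n := by exact_mod_cast hn
  set d := c ^ 2 * (n : ℝ) ^ 2 with hd
  have hdpos : 0 < d := by positivity
  have hneg : ∀ s ∈ U, gF n c d α β s < 0 := by
    intro s hs
    unfold gF
    have : 0 < Real.arsinh ((wF d α β s) ^ (-(n : ℝ)⁻¹)) :=
      Real.arsinh_pos_iff.2 (Real.rpow_pos_of_pos (hw s hs) _)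
    have := div_pos this hc
    linarith
  set v : ℝ → ℝ := fun s => α * Real.exp (d * s) + β * Real.exp (-(d * s)) with hv
  have hvd : ∀ s, HasDerivAt v (d * wF d α β s) s := by
    intro s
    have h := wF_deriv d α (-β) s
    have e : wF d α (-β) = v := by funext s; simp [wF, hv]
    rw [e] at h
    exact h.congr_deriv (by simp only [wF]; ring)
  have hg1 : ∀ s ∈ U, HasDerivAt (gF n c d α β)
      (bIII n c (gF n c d α β s) * (v s / wF d α β s)) s := by
    intro s hs
    have hws := hw s hs
    have hx := (wF_deriv d α β s).rpow_const (p := -(n : ℝ)⁻¹) (Or.inl hws.ne')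
    have h := ((hx.arsinh).div_const c).neg
    refine h.congr_deriv ?_
    have e1 : c * gF n c d α β s = -Real.arsinh ((wF d α β s) ^ (-(n : ℝ)⁻¹)) := by
      unfold gF; field_simp
    unfold bIII
    rw [e1, Real.tanh_neg, Real.tanh_eq_sinh_div_cosh, Real.sinh_arsinh, Real.cosh_arsinh,
      Real.rpow_sub_one hws.ne']
    have hsq : 0 < √(1 + (wF d α β s ^ (-(n : ℝ)⁻¹)) ^ 2) := by positivity
    simp only [smul_eq_mul]
    change -((_ * (d * v s * _ * _)) / c) = _
    generalize wF d α β s ^ (-(n : ℝ)⁻¹) = x at *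
    generalize √(1 + x ^ 2) = q at *
    rw [hd]
    field_simp
  refine ⟨hneg, ?_, ?_⟩
  · intro s hs
    have hws := hw s hs
    apply ContDiffAt.contDiffWithinAt
    unfold gF
    have hwc : ContDiffAt ℝ 2 (wF d α β) s := by unfold wF; fun_prop
    have := (hwc.rpow_const_of_ne (p := -(n : ℝ)⁻¹) hws.ne').arsinh
    exact (this.div_const c).neg
  · intro s hs
    have hws := hw s hs
    have hev : deriv (gF n c d α β) =ᶠ[𝓝 s]
        fun s => bIII n c (gF n c d α β s) * (v s / wF d α β s) := by
      filter_upwards [hU.mem_nhds hs] with t ht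
      exact (hg1 t ht).deriv
    rw [hev.deriv_eq, hev.eq_of_nhds]
    have hb := (bIII_hasDerivAt_s18 n c (gF n c d α β s)).comp s (hg1 s hs)
    have h := hb.mul ((hvd s).div (wF_deriv d α β s) hws.ne')
    have hbp := bIII_pos n hn c hc _ (hneg s hs)
    have h' := h.deriv
    simp only [Function.comp_def] at h'
    refine (Eq.trans ?_ h').trans ?_
    · rfl
    change _ * _ * (v s / wF d α β s) + _ * ((d * wF d α β s * wF d α β s - v s * (d * v s)) / _) = _
    generalize v s = V at *
    generalize wF d α β s = W at *
    generalize deriv (bIII n c) (gF n c d α β s) = b' at *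
    generalize bIII n c (gF n c d α β s) = b at *
    field_simp
    ring

lemma forward (n : ℕ) (hn : 1 ≤ n) (c : ℝ) (hc : 0 < c)
    (L : Set ℝ) (hLopen : IsOpen L) (hLconn : L.OrdConnected)
    (f : ℝ → ℝ) (hf : IsGrimReaperSolIII n c f L) (s₀ : ℝ) (hs₀ : s₀ ∈ L) :
    ∃ α β W : ℝ, 0 < W ∧
      2 * α * Real.exp (c ^ 2 * (n : ℝ) ^ 2 * s₀) = W * (deriv f s₀ + bIII n c (f s₀)) ∧
      2 * β * Real.exp (-(c ^ 2 * (n : ℝ) ^ 2 * s₀)) = W * (deriv f s₀ - bIII n c (f s₀)) ∧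
      ∀ s ∈ L, 0 < wF (c ^ 2 * (n : ℝ) ^ 2) α β s ∧
        gF n c (c ^ 2 * (n : ℝ) ^ 2) α β s = f s := by
  have hN : (0 : ℝ) < n := by exact_mod_cast hn
  obtain ⟨hneg, hC, hode⟩ := hf
  set d := c ^ 2 * (n : ℝ) ^ 2 with hd
  have hdpos : 0 < d := by positivity
  have hf1 : ∀ s ∈ L, HasDerivAt f (deriv f s) s := fun s hs =>
    ((hC.differentiableOn (by norm_num)).differentiableAt (hLopen.mem_nhds hs)).hasDerivAt
  have hf2 : ∀ s ∈ L, HasDerivAt (deriv f) (deriv (deriv f) s) s := by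
    have hC1 : ContDiffOn ℝ 1 (deriv f) L := hC.deriv_of_isOpen hLopen (by norm_num)
    exact fun s hs =>
      ((hC1.differentiableOn (by norm_num)).differentiableAt (hLopen.mem_nhds hs)).hasDerivAt
  have hb0 : ∀ s ∈ L, 0 < bIII n c (f s) := fun s hs => bIII_pos n hn c hc _ (hneg s hs)
  have hS : ∀ s ∈ L, 0 < -Real.sinh (c * f s) := by
    intro s hs
    have := Real.sinh_neg_iff.2 (mul_neg_of_pos_of_neg hc (hneg s hs))
    linarith
  set p : ℝ → ℝ := fun s => deriv f s / bIII n c (f s) with hp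
  set w : ℝ → ℝ := fun s => ((-Real.sinh (c * f s)) ^ n)⁻¹ with hwdef
  have hw0 : ∀ s ∈ L, 0 < w s := fun s hs => inv_pos.2 (pow_pos (hS s hs) n)
  have hp1 : ∀ s ∈ L, HasDerivAt p (d * (1 - p s ^ 2)) s := by
    intro s hs
    have hb := (bIII_hasDerivAt_s18 n c (f s)).comp s (hf1 s hs)
    have h := (hf2 s hs).div hb (hb0 s hs).ne'
    refine h.congr_deriv ?_
    have hbp := hb0 s hs
    rw [hode s hs]
    simp only [hp, Function.comp]
    field_simp
    ring
  have hw1 : ∀ s ∈ L, HasDerivAt w (d * p s * w s) s := by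
    intro s hs
    have h := (((((hf1 s hs).const_mul c).sinh).neg).pow n).inv (pow_pos (hS s hs) n).ne'
    refine h.congr_deriv ?_
    have hbp := hb0 s hs
    have hSp := hS s hs
    have hCp := Real.cosh_pos (c * f s)
    obtain ⟨m, rfl⟩ : ∃ m, n = m + 1 := ⟨n - 1, by omega⟩
    simp only [hp, hwdef, bIII, Pi.neg_apply, Pi.pow_apply, Real.tanh_eq_sinh_div_cosh, hd, Nat.add_sub_cancel]
    generalize deriv f s = f' at *
    generalize Real.cosh (c * f s) = C at *
    obtain ⟨S, hSe⟩ : ∃ S, S = -Real.sinh (c * f s) := ⟨_, rfl⟩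
    have hSe' : Real.sinh (c * f s) = -S := by linarith
    have hS0 : 0 < S := by rw [hSe]; exact hSp
    rw [hSe']
    simp only [neg_neg]
    have hm : (0 : ℝ) < (m : ℝ) + 1 := by positivity
    push_cast
    field_simp
    try ring
  have hconst : ∀ (F : ℝ → ℝ), (∀ s ∈ L, HasDerivAt F 0 s) → ∀ s ∈ L, F s = F s₀ := by
    intro F hF s hs
    refine hLopen.is_const_of_deriv_eq_zero hLconn.isPreconnected
      (fun t ht => (hF t ht).differentiableAt.differentiableWithinAt)
      (fun t ht => (hF t ht).deriv) hs hs₀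
  have hexp : ∀ e s : ℝ, HasDerivAt (fun s => Real.exp (e * s)) (Real.exp (e * s) * e) s := by
    intro e s
    have h0 : HasDerivAt (fun s : ℝ => e * s) e s := by
      simpa using (hasDerivAt_id s).const_mul e
    exact h0.exp
  have hA := hconst (fun s => w s * (p s + 1) * Real.exp (-d * s)) (by
    intro s hs
    refine (((hw1 s hs).mul ((hp1 s hs).add_const 1)).mul (hexp (-d) s)).congr_deriv ?_
    simp only [Pi.mul_apply]
    ring)
  have hB := hconst (fun s => w s * (p s - 1) * Real.exp (d * s)) (by
    intro s hs
    refine (((hw1 s hs).mul ((hp1 s hs).sub_const 1)).mul (hexp d s)).congr_deriv ?_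
    simp only [Pi.mul_apply]
    ring)
  have hEE : ∀ s, Real.exp (-d * s) * Real.exp (d * s) = 1 := by
    intro s; rw [← Real.exp_add]; simp
  have hEE' : ∀ s, Real.exp (-(d * s)) = Real.exp (-d * s) := by intro s; rw [neg_mul]
  refine ⟨w s₀ * (p s₀ + 1) * Real.exp (-d * s₀) / 2, w s₀ * (p s₀ - 1) * Real.exp (d * s₀) / 2,
    w s₀ / bIII n c (f s₀), div_pos (hw0 _ hs₀) (hb0 _ hs₀), ?_, ?_, ?_⟩
  · have hbp := hb0 _ hs₀
    have : deriv f s₀ = p s₀ * bIII n c (f s₀) := by simp only [hp]; field_simp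
    rw [this]
    field_simp
    rw [mul_assoc, hEE', hEE]; ring
  · have hbp := hb0 _ hs₀
    have : deriv f s₀ = p s₀ * bIII n c (f s₀) := by simp only [hp]; field_simp
    rw [this, hEE']
    field_simp
    rw [mul_assoc, mul_comm (Real.exp _), hEE', hEE]; ring
  · intro s hs
    have hwe : wF d (w s₀ * (p s₀ + 1) * Real.exp (-d * s₀) / 2)
        (w s₀ * (p s₀ - 1) * Real.exp (d * s₀) / 2) s = w s := by
      rw [← hA s hs, ← hB s hs]
      unfold wF
      rw [hEE']
      linear_combination (w s) * hEE s
    refine ⟨by rw [hwe]; exact hw0 s hs, ?_⟩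
    unfold gF
    rw [hwe]
    have : w s ^ (-(n : ℝ)⁻¹) = -Real.sinh (c * f s) := by
      simp only [hwdef]
      rw [Real.rpow_neg (inv_nonneg.2 (pow_pos (hS s hs) n).le),
        Real.inv_rpow (pow_pos (hS s hs) n).le, inv_inv,
        Real.pow_rpow_inv_natCast (hS s hs).le (by omega)]
    rw [this, Real.arsinh_neg, Real.arsinh_sinh]
    field_simp

lemma gF_atBot {l : Filter ℝ} (n : ℕ) (hn : 1 ≤ n) (c : ℝ) (hc : 0 < c) (d α β : ℝ)
    (h : Tendsto (wF d α β) l (𝓝[>] 0)) : Tendsto (gF n c d α β) l atBot := by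
  have hN : (0 : ℝ) < n := by exact_mod_cast hn
  unfold gF
  have h1 : Tendsto (fun s => (wF d α β s) ^ (-(n : ℝ)⁻¹)) l atTop :=
    (tendsto_rpow_neg_nhdsGT_zero (by simpa using hN)).comp h
  have h2 : Tendsto Real.arsinh atTop atTop := Real.sinhOrderIso.symm.tendsto_atTop
  exact tendsto_neg_atTop_atBot.comp ((h2.comp h1).atTop_div_const hc)

lemma gF_zero {l : Filter ℝ} (n : ℕ) (hn : 1 ≤ n) (c d α β : ℝ)
    (h : Tendsto (wF d α β) l atTop) : Tendsto (gF n c d α β) l (𝓝 0) := by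
  have hN : (0 : ℝ) < n := by exact_mod_cast hn
  unfold gF
  have h1 : Tendsto (fun s => (wF d α β s) ^ (-(n : ℝ)⁻¹)) l (𝓝 0) :=
    (tendsto_rpow_neg_atTop (inv_pos.2 hN)).comp h
  have h2 := (Real.continuous_arsinh.tendsto 0).comp h1
  have := (h2.div_const c).neg
  simpa [Function.comp_def] using this

lemma wF_factor (d α β : ℝ) (hd : 0 < d) (hαβ : 0 < α * β) :
    ∃ k, ∀ s, wF d α β s = α * Real.exp (d * k) * (Real.exp (d * (s - k)) - Real.exp (-(d * (s - k)))) := by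
  have hα : α ≠ 0 := left_ne_zero_of_mul hαβ.ne'
  have hq : 0 < β / α := by
    have : β / α = α * β / α ^ 2 := by field_simp
    rw [this]; positivity
  refine ⟨Real.log (β / α) / (2 * d), fun s => ?_⟩
  set k := Real.log (β / α) / (2 * d) with hk
  have hβ : β = α * Real.exp (d * k) * Real.exp (d * k) := by
    rw [mul_assoc, ← Real.exp_add, show d * k + d * k = Real.log (β / α) by rw [hk]; field_simp; ring,
      Real.exp_log hq]
    field_simp
  unfold wF
  rw [mul_sub, mul_assoc, ← Real.exp_add, mul_assoc, ← Real.exp_add]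
  nth_rewrite 1 [hβ]
  rw [mul_assoc, mul_assoc, ← Real.exp_add, ← Real.exp_add]
  ring_nf

/-- A maximal time-like solution of the type III Grim Reaper ODE is of
Type III.A: defined on `(k, +∞)` (if increasing at `s₀`) or `(-∞, k)` (if decreasing at
`s₀`), blowing up to `-∞` at the finite end `k` and tending to `0` at the infinite end. -/
theorem grimReaperIII_timelike_classification (n : ℕ) (hn : 1 ≤ n) (c : ℝ) (hc : 0 < c)
    (L : Set ℝ) (hLopen : IsOpen L) (hLconn : L.OrdConnected)
    (f : ℝ → ℝ) (hf : IsGrimReaperSolIII n c f L)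
    (s₀ : ℝ) (hs₀ : s₀ ∈ L)
    (htime : (bIII n c (f s₀)) ^ 2 < (deriv f s₀) ^ 2)
    (hmax : ∀ (L' : Set ℝ) (g : ℝ → ℝ), IsOpen L' → L'.OrdConnected → L ⊆ L' →
      IsGrimReaperSolIII n c g L' → Set.EqOn g f L → L' = L) :
    ∃ k : ℝ,
      (0 < deriv f s₀ →
        L = Set.Ioi k ∧
        Filter.Tendsto f (𝓝[>] k) Filter.atBot ∧
        Filter.Tendsto f Filter.atTop (𝓝 0)) ∧
      (deriv f s₀ < 0 →
        L = Set.Iio k ∧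
        Filter.Tendsto f (𝓝[<] k) Filter.atBot ∧
        Filter.Tendsto f Filter.atBot (𝓝 0)) := by
  have hN : (0 : ℝ) < n := by exact_mod_cast hn
  obtain ⟨α, β, W, hW, hα, hβ, hL⟩ := forward n hn c hc L hLopen hLconn f hf s₀ hs₀
  have hsol := gF_sol n hn c hc α β
  have hdpos : 0 < c ^ 2 * (n : ℝ) ^ 2 := by positivity
  generalize c ^ 2 * (n : ℝ) ^ 2 = d at *
  have hb := bIII_pos n hn c hc _ (hf.1 s₀ hs₀)
  have hE1 := Real.exp_pos (d * s₀)
  have hE2 := Real.exp_pos (-(d * s₀))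
  have hwc : Continuous (wF d α β) := by unfold wF; fun_prop
  have hlin : Tendsto (fun s : ℝ => d * s) atTop atTop := tendsto_id.const_mul_atTop hdpos
  have hlin' : Tendsto (fun s : ℝ => d * s) atBot atBot := tendsto_id.const_mul_atBot hdpos
  have hαβ : 0 < α * β := by
    have h1 : 0 < (2 * α * Real.exp (d * s₀)) * (2 * β * Real.exp (-(d * s₀))) := by
      rw [hα, hβ]
      have : 0 < W ^ 2 * ((deriv f s₀) ^ 2 - (bIII n c (f s₀)) ^ 2) :=
        mul_pos (pow_pos hW 2) (by linarith)
      linarith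
    have h2 : (2 * α * Real.exp (d * s₀)) * (2 * β * Real.exp (-(d * s₀))) = 4 * (α * β) := by
      rw [Real.exp_neg]; field_simp; ring
    linarith
  obtain ⟨k, hk⟩ := wF_factor d α β hdpos hαβ
  have hwk : wF d α β k = 0 := by rw [hk]; simp
  have hEk := Real.exp_pos (d * k)
  refine ⟨k, fun hpos => ?_, fun hneg => ?_⟩
  · have hα0 : 0 < α := by
      have : 0 < 2 * α * Real.exp (d * s₀) := by rw [hα]; positivity
      have := pos_of_mul_pos_left this hE1.le
      linarith
    have hβ0 : 0 < β := pos_of_mul_pos_right hαβ hα0.le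
    have hiff : ∀ s, 0 < wF d α β s ↔ k < s := by
      intro s
      rw [hk, mul_pos_iff_of_pos_left (by positivity), sub_pos, Real.exp_lt_exp]
      constructor
      · intro h; by_contra! h'; nlinarith
      · intro h; nlinarith
    have hLk : Ioi k = L := hmax (Ioi k) (gF n c d α β) isOpen_Ioi ordConnected_Ioi
      (fun s hs => (hiff s).1 (hL s hs).1) (hsol _ isOpen_Ioi fun s hs => (hiff s).2 hs)
      (fun s hs => (hL s hs).2)
    have hEq : EqOn (gF n c d α β) f (Ioi k) := fun s hs => (hL s (hLk ▸ hs)).2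
    refine ⟨hLk.symm, ?_, ?_⟩
    · refine (gF_atBot n hn c hc d α β ?_).congr' (eventually_nhdsWithin_of_forall hEq)
      refine tendsto_nhdsWithin_iff.2 ⟨?_, eventually_nhdsWithin_of_forall fun s hs => (hiff s).2 hs⟩
      have := hwc.tendsto k
      rw [hwk] at this
      exact this.mono_left nhdsWithin_le_nhds
    · refine (gF_zero n hn c d α β ?_).congr' ((eventually_gt_atTop k).mono hEq)
      unfold wF
      have h1 := (Real.tendsto_exp_atTop.comp hlin).const_mul_atTop hα0
      have h2 := (Real.tendsto_exp_neg_atTop_nhds_zero.comp hlin).const_mul (-β)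
      simpa [sub_eq_add_neg] using h1.atTop_add h2
  · have hβ0 : β < 0 := by
      have : 2 * β * Real.exp (-(d * s₀)) < 0 := by
        rw [hβ]; exact mul_neg_of_pos_of_neg hW (by linarith)
      by_contra! h
      have : 0 ≤ 2 * β * Real.exp (-(d * s₀)) := by positivity
      linarith
    have hα0 : α < 0 := by
      by_contra! h
      nlinarith
    have hiff : ∀ s, 0 < wF d α β s ↔ s < k := by
      intro s
      have h0 : α * Real.exp (d * k) < 0 := mul_neg_of_neg_of_pos hα0 hEk
      rw [hk, mul_pos_iff]
      simp only [h0, h0.not_gt, false_and, true_and, false_or, sub_neg, Real.exp_lt_exp]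
      constructor
      · intro h; by_contra! h'; nlinarith
      · intro h; nlinarith
    have hLk : Iio k = L := hmax (Iio k) (gF n c d α β) isOpen_Iio ordConnected_Iio
      (fun s hs => (hiff s).1 (hL s hs).1) (hsol _ isOpen_Iio fun s hs => (hiff s).2 hs)
      (fun s hs => (hL s hs).2)
    have hEq : EqOn (gF n c d α β) f (Iio k) := fun s hs => (hL s (hLk ▸ hs)).2
    refine ⟨hLk.symm, ?_, ?_⟩
    · refine (gF_atBot n hn c hc d α β ?_).congr' (eventually_nhdsWithin_of_forall hEq)
      refine tendsto_nhdsWithin_iff.2 ⟨?_, eventually_nhdsWithin_of_forall fun s hs => (hiff s).2 hs⟩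
      have := hwc.tendsto k
      rw [hwk] at this
      exact this.mono_left nhdsWithin_le_nhds
    · refine (gF_zero n hn c d α β ?_).congr' ((eventually_lt_atBot k).mono hEq)
      unfold wF
      have h1 := (Real.tendsto_exp_atTop.comp (tendsto_neg_atBot_atTop.comp hlin')).const_mul_atTop
        (neg_pos.2 hβ0)
      have h2 := (Real.tendsto_exp_atBot.comp hlin').const_mul α
      simpa [sub_eq_add_neg] using h2.add_atTop h1
end
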